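/- arXiv:2201.06277 — 2 statements merged into one kernel-verified Lean document; each statement's English description precedes it below -/
import Mathlib

section
/- Assume S has finite VC dimension V and S' ⊆ S is a countable subset given by the separability assumption (every g ∈ S is a pointwise limit, in the loss r_SAR, of a sequence from S'). Assume the propensity satisfies e(x) ≥ e_m > 0, set C_e = 2/e_m − 1 and d(g,g') = √(2·C_e)·√(E[|g(X) − g'(X)|²]). Then there exists an absolute constant K ≥ 1 such that the function Φ(σ) = K·σ·√(V·(1 + log(max(C_e/σ, 1)))) satisfies √n·E[sup_{g ∈ S', d(g,g₀) ≤ σ} ( R̄_n^SAR(g₀) − R̄_n^SAR(g) )] ≤ Φ(σ) for all g₀ ∈ S' and every σ > 0 such that Φ(σ) ≤ √n·σ²/C_e, where R̄_n^SAR(g) = R̂_n^SAR(g) − P(g(X) ≠ Y) is the centered empirical SAR risk. -/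
open MeasureTheory ProbabilityTheory Real Filter Topology

noncomputable section

/-- A classifier: a measurable `{0,1}`-valued function on the feature space. -/
def IsClassifier {α : Type*} [MeasurableSpace α] (g : α → ℝ) : Prop :=
  Measurable g ∧ ∀ x, g x = 0 ∨ g x = 1

/-- `η` is a version of the regression function `x ↦ P(Y = 1 ∣ X = x)`. -/
def IsRegression {Ω α : Type*} [MeasurableSpace Ω] [MeasurableSpace α]
    (P : Measure Ω) (X : Ω → α) (Y : Ω → ℝ) (η : α → ℝ) : Prop :=
  Measurable η ∧ (∀ x, 0 ≤ η x ∧ η x ≤ 1) ∧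
    ∀ A : Set α, MeasurableSet A →
      ∫ ω in X ⁻¹' A, Y ω ∂P = ∫ ω in X ⁻¹' A, η (X ω) ∂P

/-- `e` is the propensity: `P(S = 1 ∣ Y = 1, X = x) = e x` and
`P(S = 1 ∣ Y = 0, X = x) = 0` (the latter is equivalent to `S ≤ Y` a.s.). -/
def IsPropensity {Ω α : Type*} [MeasurableSpace Ω] [MeasurableSpace α]
    (P : Measure Ω) (X : Ω → α) (Y S : Ω → ℝ) (e : α → ℝ) : Prop :=
  Measurable e ∧ (∀ x, 0 ≤ e x ∧ e x ≤ 1) ∧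
    (∀ᵐ ω ∂P, S ω ≤ Y ω) ∧
    ∀ A : Set α, MeasurableSet A →
      ∫ ω in X ⁻¹' A, S ω ∂P = ∫ ω in X ⁻¹' A, e (X ω) * Y ω ∂P

/-- Misclassification risk `R(g) = P(g(X) ≠ Y)`. -/
def risk {Ω α : Type*} [MeasurableSpace Ω]
    (P : Measure Ω) (X : Ω → α) (Y : Ω → ℝ) (g : α → ℝ) : ℝ :=
  (P {ω | g (X ω) ≠ Y ω}).toReal

/-- The Bayes classifier `g*(x) = 1{η(x) ≥ 1/2}`. -/
def bayes {α : Type*} (η : α → ℝ) : α → ℝ := fun x => if (1 : ℝ) / 2 ≤ η x then 1 else 0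

/-- Excess risk `ℓ(g, g*) = R(g) − R(g*)`. -/
def excessRisk {Ω α : Type*} [MeasurableSpace Ω]
    (P : Measure Ω) (X : Ω → α) (Y : Ω → ℝ) (η : α → ℝ) (g : α → ℝ) : ℝ :=
  risk P X Y g - risk P X Y (bayes η)

/-- The SAR loss `r_SAR(g,(x,s)) = (1{s=1}/e(x))·(2·1{g(x)≠1} − 1) + 1{g(x)≠0}`. -/
def rSAR {α : Type*} (e : α → ℝ) (g : α → ℝ) (p : α × ℝ) : ℝ :=
  (if p.2 = 1 then (1 : ℝ) else 0) / e p.1 * (2 * (if g p.1 ≠ 1 then (1 : ℝ) else 0) - 1)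
    + (if g p.1 ≠ 0 then (1 : ℝ) else 0)

/-- Empirical risk `(1/n)·Σ_{i=1}^n r(g,(X_i,S_i))` of a generic loss `r` on an `n`-sample. -/
def empRisk {Ω α : Type*} (r : (α → ℝ) → α × ℝ → ℝ) (X : Ω → α) (S : Ω → ℝ) (n : ℕ)
    (g : α → ℝ) (ω : Fin n → Ω) : ℝ :=
  (1 / (n : ℝ)) * ∑ i : Fin n, r g (X (ω i), S (ω i))

/-- A finite set of points is shattered by the class `𝒮`: every labeling is realized. -/
def Shatters {α : Type*} (𝒮 : Set (α → ℝ)) {k : ℕ} (x : Fin k → α) : Prop :=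
  ∀ b : Fin k → Bool, ∃ g ∈ 𝒮, ∀ i, g (x i) = if b i then 1 else 0

/-- The class `𝒮` has VC dimension exactly `V`. -/
def HasVCDim {α : Type*} (𝒮 : Set (α → ℝ)) (V : ℕ) : Prop :=
  (∃ x : Fin V → α, Shatters 𝒮 x) ∧ ∀ x : Fin (V + 1) → α, ¬ Shatters 𝒮 x

/-- Separability assumption (A₁): a countable subclass `𝒮' ⊆ 𝒮` that is dense in
the sense of pointwise convergence of the loss `r`. -/
def SeparableClass {α : Type*} (r : (α → ℝ) → α × ℝ → ℝ) (𝒮 𝒮' : Set (α → ℝ)) : Prop :=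
  𝒮' ⊆ 𝒮 ∧ 𝒮'.Countable ∧
    ∀ g ∈ 𝒮, ∃ u : ℕ → α → ℝ, (∀ k, u k ∈ 𝒮') ∧
      ∀ p : α × ℝ, Tendsto (fun k => r (u k) p) atTop (𝓝 (r g p))

/-- The set of admissible distributions for the minimax risk: `μ` is the joint law of
`(X, Y, S)`, with regression function `η` satisfying the Massart noise condition with
margin `h`, Bayes classifier in `𝒮`, and propensity `e`. -/
def PUAdmissible {α : Type*} [MeasurableSpace α] (e : α → ℝ) (𝒮 : Set (α → ℝ)) (h : ℝ)
    (μ : Measure (α × ℝ × ℝ)) (η : α → ℝ) : Prop :=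
  IsProbabilityMeasure μ ∧
    (∀ᵐ p ∂μ, (p.2.1 = 0 ∨ p.2.1 = 1) ∧ (p.2.2 = 0 ∨ p.2.2 = 1)) ∧
    IsRegression μ (fun p => p.1) (fun p => p.2.1) η ∧
    IsPropensity μ (fun p => p.1) (fun p => p.2.1) (fun p => p.2.2) e ∧
    bayes η ∈ 𝒮 ∧ (∀ x, h ≤ |2 * η x - 1|)

/-- Minimax risk: infimum over estimators (functions of the observed `(X_i, S_i)` sample,
valued in `𝒮`) of the supremum over admissible distributions of the expected excess risk. -/
def minimaxRisk {α : Type*} [MeasurableSpace α] (e : α → ℝ) (𝒮 : Set (α → ℝ)) (h : ℝ)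
    (n : ℕ) : ℝ :=
  ⨅ ghat : {f : (Fin n → α × ℝ) → α → ℝ // ∀ z, f z ∈ 𝒮},
    ⨆ q : {q : Measure (α × ℝ × ℝ) × (α → ℝ) // PUAdmissible e 𝒮 h q.1 q.2},
      ∫ z, excessRisk q.1.1 (fun p => p.1) (fun p => p.2.1) q.1.2 (ghat.1 z)
        ∂(Measure.pi fun _ : Fin n => q.1.1.map (fun p => (p.1, p.2.2)))

/-!
A change of prediction changes the SAR loss by `(g - g₀)(X) * u`, where the multiplier
`u = 2 * 1{S = 1} / e(X) - 1` is bounded by `C = 2 / e_m - 1`; inverse-propensity weighting is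
unbiased, so this product has mean `R(g₀) - R(g)` and second moment at most `d(g, g₀) ^ 2`. The
claim is thus a localized maximal inequality for the centered sums of `(g - g₀)(X) * u`.

Symmetrization bounds the expected supremum by a Rademacher complexity. Conditionally on the sample,
this is a process indexed by sets of bounded VC dimension, for which dyadic chaining converges
because the packing numbers do not depend on the sample size. The resulting bound is proportional to
the empirical `L²` radius of the class. The same bound applied to the squares shows that this radius
exceeds `σ` in expectation by at most a constant factor, once `n` is large enough for the stated
upper bound on `Φ`.
-/

open scoped BigOperators symmDiff

section Combinatorics

variable {κ : Type*} [DecidableEq κ] {𝒜 : Finset (Finset κ)} {V : ℕ} {δ : ℝ}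

lemma vcDim_image_comap_le {κ' : Type*} [Fintype κ'] [DecidableEq κ'] (𝒜 : Finset (Finset κ))
    (φ : κ' → κ) : (𝒜.image fun s => ({j | φ j ∈ s} : Finset κ')).vcDim ≤ 𝒜.vcDim := by
  refine Finset.sup_le fun u hu => ?_
  have trace_on : ∀ t ⊆ u, ∃ s ∈ 𝒜, ∀ j ∈ u, φ j ∈ s ↔ j ∈ t := by
    intro t ht
    obtain ⟨_, hs', hut⟩ := Finset.mem_shatterer.1 hu ht
    obtain ⟨s, hs, rfl⟩ := Finset.mem_image.1 hs'
    refine ⟨s, hs, fun j hj => ?_⟩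
    simp [← hut, hj]
  have φ_inj : Set.InjOn φ u := by
    intro j hj j' hj' hφ
    obtain ⟨s, -, hs⟩ := trace_on {j} (Finset.singleton_subset_iff.2 hj)
    have hj's : j' ∈ ({j} : Finset κ') := (hs j' hj').1 (hφ ▸ (hs j hj).2 (by simp))
    exact (Finset.mem_singleton.1 hj's).symm
  have image_shattered : 𝒜.Shatters (u.image φ) := by
    intro t ht
    obtain ⟨s, hs, hst⟩ := trace_on (u.filter (φ · ∈ t)) (Finset.filter_subset _ _)
    refine ⟨s, hs, Finset.Subset.antisymm (fun k hk => ?_) fun k hk => ?_⟩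
    · obtain ⟨hku, hks⟩ := Finset.mem_inter.1 hk
      obtain ⟨j, hj, rfl⟩ := Finset.mem_image.1 hku
      exact (Finset.mem_filter.1 ((hst j hj).1 hks)).2
    · obtain ⟨j, hj, rfl⟩ := Finset.mem_image.1 (ht hk)
      exact Finset.mem_inter.2 ⟨ht hk, (hst j hj).2 (Finset.mem_filter.2 ⟨hj, hk⟩)⟩
  exact (Finset.card_image_of_injOn φ_inj).symm.le.trans image_shattered.card_le_vcDim

lemma vcDim_le_of_not_shatters {α : Type*} {𝒢 : Set (α → ℝ)}
    (hV : ∀ x : Fin (V + 1) → α, ¬ Shatters 𝒢 x) (x : κ → α)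
    (h𝒜 : ∀ s ∈ 𝒜, ∃ g ∈ 𝒢, ∀ k, g (x k) = if k ∈ s then 1 else 0) : 𝒜.vcDim ≤ V := by
  refine Finset.sup_le fun u hu => ?_
  by_contra! hlt
  obtain ⟨t, htu, ht⟩ := Finset.exists_subset_card_eq (Nat.succ_le_of_lt hlt)
  let point := t.equivFinOfCardEq ht
  refine hV (fun i => x (point.symm i)) fun b => ?_
  have hsub : {k ∈ t | ∃ i, b i ∧ (point.symm i : κ) = k} ⊆ t := Finset.filter_subset _ _
  obtain ⟨s, hs, hts⟩ := (Finset.mem_shatterer.1 hu).mono_right htu hsub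
  obtain ⟨g, hg, hgs⟩ := h𝒜 s hs
  refine ⟨g, hg, fun i => ?_⟩
  have hi : (point.symm i : κ) ∈ s ↔ b i := by
    have hmem := Finset.ext_iff.1 hts (point.symm i)
    simpa [Subtype.coe_inj] using hmem
  simp only [hgs, hi]

lemma exists_separated_net (𝒜 : Finset (Finset κ)) {d : ℝ} (hd : 0 < d) :
    ∃ 𝒩 ⊆ 𝒜, (𝒩 : Set (Finset κ)).Pairwise (fun s t => d ≤ (s ∆ t).card) ∧
      ∀ s ∈ 𝒜, ∃ t ∈ 𝒩, ((s ∆ t).card : ℝ) < d := by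
  classical
  obtain ⟨𝒩, h𝒩, hmax⟩ := (𝒜.powerset.filter fun 𝒩 : Finset (Finset κ) =>
    (𝒩 : Set (Finset κ)).Pairwise fun s t => d ≤ (s ∆ t).card).exists_maximal ⟨∅, by simp⟩
  obtain ⟨hsub, hsep⟩ : 𝒩 ⊆ 𝒜 ∧ _ := by simpa using h𝒩
  refine ⟨𝒩, hsub, hsep, fun s hs => ?_⟩
  by_contra! hfar
  have hs𝒩 : s ∉ 𝒩 := fun h => hd.not_ge (by simpa using hfar s h)
  have hinsert : ((insert s 𝒩 : Finset _) : Set (Finset κ)).Pairwise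
      fun s t => d ≤ (s ∆ t).card := by
    rw [Finset.coe_insert]
    exact hsep.insert fun t ht _ => ⟨hfar t ht, symmDiff_comm s t ▸ hfar t ht⟩
  exact hs𝒩 (hmax (by simpa [Finset.insert_subset_iff, hs, hsub] using hinsert)
    (Finset.subset_insert s 𝒩) (Finset.mem_insert_self s 𝒩))

variable [Fintype κ]

lemma card_le_of_vcDim_le (hV : 𝒜.vcDim ≤ V) {x : ℝ} (hx : 0 < x) (hx1 : x ≤ 1) :
    (𝒜.card : ℝ) ≤ (1 / x) ^ V * exp (x * Fintype.card κ) := by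
  have one_le_weight : ∀ s ∈ 𝒜.shatterer, 1 ≤ (1 / x) ^ V * x ^ s.card := by
    intro s hs
    have hsV : s.card ≤ V := (Finset.mem_shatterer.1 hs).card_le_vcDim.trans hV
    rw [one_div, inv_pow, ← div_eq_inv_mul, one_le_div (by positivity)]
    exact pow_le_pow_of_le_one hx.le hx1 hsV
  calc (𝒜.card : ℝ) ≤ 𝒜.shatterer.card := by exact_mod_cast 𝒜.card_le_card_shatterer
    _ = ∑ _s ∈ 𝒜.shatterer, (1 : ℝ) := by simp
    _ ≤ ∑ s ∈ 𝒜.shatterer, (1 / x) ^ V * x ^ s.card := Finset.sum_le_sum one_le_weight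
    _ ≤ ∑ s : Finset κ, (1 / x) ^ V * x ^ s.card :=
        Finset.sum_le_univ_sum_of_nonneg fun _ => by positivity
    _ = (1 / x) ^ V * (x + 1) ^ Fintype.card κ := by
        rw [← Finset.mul_sum, ← Fintype.sum_pow_mul_eq_add_pow κ x 1]
        simp
    _ ≤ (1 / x) ^ V * exp (x * Fintype.card κ) := by
        rw [mul_comm x, exp_nat_mul]
        gcongr
        exact add_one_le_exp x

lemma card_filter_agree_le {s t : Finset κ} (hst : δ * Fintype.card κ ≤ (s ∆ t).card) :
    ((Finset.univ.filter fun k => k ∈ s ↔ k ∈ t).card : ℝ) ≤ Fintype.card κ * exp (-δ) := by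
  have agree_eq : (Finset.univ.filter fun k => k ∈ s ↔ k ∈ t) = (s ∆ t)ᶜ := by
    ext k; simp only [Finset.mem_filter_univ, Finset.mem_compl, Finset.mem_symmDiff]; tauto
  have hcard : ((s ∆ t)ᶜ.card : ℝ) + (s ∆ t).card = Fintype.card κ := by
    exact_mod_cast Finset.card_compl_add_card (s ∆ t)
  rw [agree_eq]
  nlinarith [add_one_le_exp (-δ), (Fintype.card κ).cast_nonneg (α := ℝ)]

lemma exists_injOn_comap [Nonempty κ] {m : ℕ}
    (hsep : (𝒜 : Set (Finset κ)).Pairwise fun s t => δ * Fintype.card κ ≤ (s ∆ t).card)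
    (hm : (𝒜.card : ℝ) ^ 2 * exp (-(δ * m)) < 1) :
    ∃ φ : Fin m → κ,
      Set.InjOn (fun s => ({j | φ j ∈ s} : Finset (Fin m))) (𝒜 : Set (Finset κ)) := by
  by_contra! hnot
  set agree : Finset κ × Finset κ → Finset (Fin m → κ) := fun p =>
    Fintype.piFinset fun _ => Finset.univ.filter fun k => k ∈ p.1 ↔ k ∈ p.2 with hagree
  have cover : (Finset.univ : Finset (Fin m → κ)) ⊆ 𝒜.offDiag.biUnion agree := by
    intro φ _
    obtain ⟨s, hs, t, ht, heq, hne⟩ : ∃ s ∈ 𝒜, ∃ t ∈ 𝒜, (∀ j, φ j ∈ s ↔ φ j ∈ t) ∧ s ≠ t := by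
      simpa [Set.InjOn, Finset.ext_iff] using hnot φ
    exact Finset.mem_biUnion.2 ⟨(s, t), by simp [hs, ht, hne], by simpa [hagree] using heq⟩
  have card_agree_le : ∀ p ∈ 𝒜.offDiag,
      ((agree p).card : ℝ) ≤ Fintype.card κ ^ m * exp (-(δ * m)) := by
    intro p hp
    obtain ⟨hs, ht, hne⟩ := Finset.mem_offDiag.1 hp
    calc ((agree p).card : ℝ)
        = ((Finset.univ.filter fun k => k ∈ p.1 ↔ k ∈ p.2).card : ℝ) ^ m := by
          simp [hagree]
      _ ≤ (Fintype.card κ * exp (-δ)) ^ m := by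
          gcongr
          exact card_filter_agree_le (hsep hs ht hne)
      _ = Fintype.card κ ^ m * exp (-(δ * m)) := by
          rw [mul_pow, ← exp_nat_mul, mul_neg, mul_comm δ]
  have offDiag_le : (𝒜.offDiag.card : ℝ) ≤ (𝒜.card : ℝ) ^ 2 := by
    have := 𝒜.offDiag_card
    exact_mod_cast (by rw [this, sq]; exact Nat.sub_le _ _ : 𝒜.offDiag.card ≤ 𝒜.card ^ 2)
  have hpos : (0 : ℝ) < (Fintype.card κ : ℝ) ^ m := by positivity
  refine lt_irrefl ((Fintype.card κ : ℝ) ^ m) ?_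
  calc (Fintype.card κ : ℝ) ^ m = ((Finset.univ : Finset (Fin m → κ)).card : ℝ) := by simp
    _ ≤ ∑ p ∈ 𝒜.offDiag, ((agree p).card : ℝ) := by
        exact_mod_cast (Finset.card_le_card cover).trans Finset.card_biUnion_le
    _ ≤ 𝒜.offDiag.card * (Fintype.card κ ^ m * exp (-(δ * m))) := by
        simpa using Finset.sum_le_sum card_agree_le
    _ ≤ (𝒜.card : ℝ) ^ 2 * (Fintype.card κ ^ m * exp (-(δ * m))) := by gcongr
    _ = Fintype.card κ ^ m * ((𝒜.card : ℝ) ^ 2 * exp (-(δ * m))) := by ring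
    _ < Fintype.card κ ^ m := mul_lt_of_lt_one_right hpos hm

/- Sampling `m ≈ 2 log #𝒜 / δ` coordinates already separates `𝒜`, so the shatter bound applies to
subsets of `Fin m`, which removes the dependence on `Fintype.card κ`. -/
lemma log_card_le_of_separated [Nonempty κ] (hV : 𝒜.vcDim ≤ V) (hδ : 0 < δ) (hδ1 : δ ≤ 1)
    (hsep : (𝒜 : Set (Finset κ)).Pairwise fun s t => δ * Fintype.card κ ≤ (s ∆ t).card) :
    log 𝒜.card ≤ 2 * V * log (4 / δ) + 1 / 2 := by
  have hlog4 : 0 ≤ log (4 / δ) := log_nonneg (by rw [le_div_iff₀ hδ]; linarith)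
  rcases 𝒜.eq_empty_or_nonempty with rfl | hne
  · simp only [Finset.card_empty, Nat.cast_zero, log_zero]
    positivity
  have hcard : (0 : ℝ) < 𝒜.card := by exact_mod_cast hne.card_pos
  set m := ⌊2 * log 𝒜.card / δ⌋₊ + 1 with hm
  have lt_m : 2 * log 𝒜.card < δ * m := by
    rw [← div_lt_iff₀' hδ, hm]
    exact_mod_cast Nat.lt_floor_add_one _
  have m_le : δ / 4 * m ≤ log 𝒜.card / 2 + 1 / 4 := by
    have hfloor : (m : ℝ) ≤ 2 * log 𝒜.card / δ + 1 := by
      simpa [hm] using Nat.floor_le (show 0 ≤ 2 * log 𝒜.card / δ by positivity)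
    calc δ / 4 * m ≤ δ / 4 * (2 * log 𝒜.card / δ + 1) := by gcongr
      _ = log 𝒜.card / 2 + δ / 4 := by field_simp; ring
      _ ≤ log 𝒜.card / 2 + 1 / 4 := by linarith
  obtain ⟨φ, hφ⟩ := exists_injOn_comap hsep (m := m) <| by
    rw [← exp_log hcard, ← exp_nat_mul, ← exp_add, exp_lt_one_iff]
    push_cast
    linarith
  have hsauer : (𝒜.card : ℝ) ≤ (1 / (δ / 4)) ^ V * exp (δ / 4 * m) := by
    rw [← Finset.card_image_of_injOn hφ]
    simpa only [Fintype.card_fin] using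
      card_le_of_vcDim_le ((vcDim_image_comap_le 𝒜 φ).trans hV) (by positivity) (by linarith)
  have := log_le_log hcard hsauer
  rw [log_mul (by positivity) (by positivity), log_exp, log_pow, one_div_div] at this
  linarith

end Combinatorics

section Rademacher

variable {κ : Type*} [Fintype κ] [DecidableEq κ] {ι ι' : Type*}

/-- The unnormalised Rademacher complexity of the vectors `t i`: the average over all sign vectors
`ε` of `⨆ i, ∑ k, ε k * t i k`. Signs are units of `ℤ`, so that the average is over a finite type
and needs no measure. -/
def rademacherComplexity (t : ι → κ → ℝ) : ℝ :=
  𝔼 ε : κ → ℤˣ, ⨆ i, ∑ k, ((ε k : ℤ) : ℝ) * t i k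

lemma rademacherComplexity_comp_le [Nonempty ι] [Finite ι'] (t : ι' → κ → ℝ) (f : ι → ι') :
    rademacherComplexity (t ∘ f) ≤ rademacherComplexity t :=
  Finset.expect_le_expect fun ε _ => ciSup_le fun i =>
    le_ciSup (f := fun i' => ∑ k, ((ε k : ℤ) : ℝ) * t i' k) (Set.finite_range _).bddAbove (f i)

lemma rademacherComplexity_add_le [Finite ι] [Nonempty ι] (t u : ι → κ → ℝ) :
    rademacherComplexity (t + u) ≤ rademacherComplexity t + rademacherComplexity u := by
  rw [rademacherComplexity, rademacherComplexity, rademacherComplexity,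
    ← Finset.expect_add_distrib]
  refine Finset.expect_le_expect fun ε _ => ciSup_le fun i => ?_
  simp only [Pi.add_apply, mul_add, Finset.sum_add_distrib]
  exact add_le_add
    (le_ciSup (f := fun i => ∑ k, ((ε k : ℤ) : ℝ) * t i k) (Set.finite_range _).bddAbove i)
    (le_ciSup (f := fun i => ∑ k, ((ε k : ℤ) : ℝ) * u i k) (Set.finite_range _).bddAbove i)

lemma expect_exp_sum_sign_mul_le (a : κ → ℝ) :
    𝔼 ε : κ → ℤˣ, exp (∑ k, ((ε k : ℤ) : ℝ) * a k) ≤ exp ((∑ k, a k ^ 2) / 2) := by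
  have sum_sign : ∀ k, ∑ s : ℤˣ, exp (((s : ℤ) : ℝ) * a k) = 2 * cosh (a k) := fun k => by
    simp [UnitsInt.univ, cosh_eq]; ring
  have factor : ∑ ε : κ → ℤˣ, exp (∑ k, ((ε k : ℤ) : ℝ) * a k) = ∏ k, 2 * cosh (a k) := by
    simp only [exp_sum, ← sum_sign]
    rw [Finset.prod_univ_sum, Fintype.piFinset_univ]
  calc 𝔼 ε : κ → ℤˣ, exp (∑ k, ((ε k : ℤ) : ℝ) * a k) = ∏ k, cosh (a k) := by
        rw [Fintype.expect_eq_sum_div_card, factor, Finset.prod_mul_distrib]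
        simp
    _ ≤ ∏ k, exp (a k ^ 2 / 2) :=
        Finset.prod_le_prod (fun k _ => (cosh_pos _).le) fun k _ => cosh_le_exp_half_sq _
    _ = exp ((∑ k, a k ^ 2) / 2) := by rw [← exp_sum, Finset.sum_div]

lemma exp_expect_le (F : (κ → ℤˣ) → ℝ) : exp (𝔼 ε, F ε) ≤ 𝔼 ε, exp (F ε) := by
  have := convexOn_exp.map_sum_le (t := Finset.univ)
    (w := fun _ : κ → ℤˣ => (Fintype.card (κ → ℤˣ) : ℝ)⁻¹) (p := F)
    (fun _ _ => by positivity) (by simp) (fun _ _ => Set.mem_univ _)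
  simpa only [smul_eq_mul, ← Finset.mul_sum, Fintype.expect_eq_sum_div_card, div_eq_inv_mul]
    using this

lemma expect_exp_iSup_sum_le [Finite ι] [Nonempty ι] (t : ι → κ → ℝ) {c : ℝ}
    (ht : ∀ i, (∑ k, t i k ^ 2) / 2 ≤ c) :
    𝔼 ε : κ → ℤˣ, exp (⨆ i, ∑ k, ((ε k : ℤ) : ℝ) * t i k) ≤ Nat.card ι * exp c := by
  have := Fintype.ofFinite ι
  calc 𝔼 ε : κ → ℤˣ, exp (⨆ i, ∑ k, ((ε k : ℤ) : ℝ) * t i k)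
      ≤ 𝔼 ε : κ → ℤˣ, ∑ i, exp (∑ k, ((ε k : ℤ) : ℝ) * t i k) := by
        refine Finset.expect_le_expect fun ε _ => ?_
        obtain ⟨i, hi⟩ := exists_eq_ciSup_of_finite (f := fun i => ∑ k, ((ε k : ℤ) : ℝ) * t i k)
        rw [← hi]
        exact Finset.single_le_sum (f := fun i => exp (∑ k, ((ε k : ℤ) : ℝ) * t i k))
          (fun _ _ => (exp_pos _).le) (Finset.mem_univ i)
    _ = ∑ i, 𝔼 ε : κ → ℤˣ, exp (∑ k, ((ε k : ℤ) : ℝ) * t i k) := Finset.expect_sum_comm _ _ _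
    _ ≤ ∑ _i : ι, exp c := Finset.sum_le_sum fun i _ =>
        (expect_exp_sum_sign_mul_le (t i)).trans (exp_le_exp.2 (ht i))
    _ = Nat.card ι * exp c := by simp

/- Massart's finite-class lemma: Jensen's inequality for `exp (c * ·)`, optimised at
`c = √(2 * L) / ρ`. -/
lemma rademacherComplexity_le_of_log_card_le [Finite ι] [Nonempty ι] {t : ι → κ → ℝ} {ρ L : ℝ}
    (hρ : 0 < ρ) (hL : 0 < L) (ht : ∀ i, ∑ k, t i k ^ 2 ≤ ρ ^ 2) (hcard : log (Nat.card ι) ≤ L) :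
    rademacherComplexity t ≤ ρ * √(2 * L) := by
  set c := √(2 * L) / ρ with hc
  have hc0 : 0 < c := by positivity
  have hcρ : c ^ 2 * ρ ^ 2 = 2 * L := by
    rw [hc, div_pow, sq_sqrt (by positivity), div_mul_cancel₀ _ (by positivity)]
  have scaled : ∀ i, (∑ k, (c * t i k) ^ 2) / 2 ≤ L := fun i => by
    have := mul_le_mul_of_nonneg_left (ht i) (sq_nonneg c)
    simp only [mul_pow, ← Finset.mul_sum]
    linarith
  have hexp : exp (c * rademacherComplexity t) ≤ Nat.card ι * exp L := by
    refine le_trans (le_of_eq_of_le ?_ (exp_expect_le _)) (expect_exp_iSup_sum_le _ scaled)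
    rw [rademacherComplexity, Finset.mul_expect]
    simp only [Real.mul_iSup_of_nonneg hc0.le, Finset.mul_sum, mul_left_comm c]
  have hcard0 : (0 : ℝ) < Nat.card ι := by exact_mod_cast Nat.card_pos
  have hlog : c * rademacherComplexity t ≤ 2 * L := by
    have := log_le_log (exp_pos _) hexp
    rw [log_exp, log_mul hcard0.ne' (exp_pos _).ne', log_exp] at this
    linarith
  have hopt : c * (ρ * √(2 * L)) = 2 * L := by
    rw [hc]; field_simp; exact sq_sqrt (by positivity)
  exact le_of_mul_le_mul_left (hlog.trans_eq hopt.symm) hc0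

lemma rademacherComplexity_le_add_of_approx [Finite ι] [Nonempty ι] [Finite ι'] {t : ι → κ → ℝ}
    {u : ι' → κ → ℝ} {ρ L : ℝ} (hρ : 0 < ρ) (hL : 0 < L)
    (happrox : ∀ i, ∃ i', ∑ k, (t i k - u i' k) ^ 2 ≤ ρ ^ 2) (hcard : log (Nat.card ι) ≤ L) :
    rademacherComplexity t ≤ rademacherComplexity u + ρ * √(2 * L) := by
  choose near hnear using happrox
  calc rademacherComplexity t = rademacherComplexity (u ∘ near + (t - u ∘ near)) := by
        rw [add_sub_cancel]
    _ ≤ rademacherComplexity (u ∘ near) + rademacherComplexity (t - u ∘ near) :=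
        rademacherComplexity_add_le _ _
    _ ≤ rademacherComplexity u + ρ * √(2 * L) :=
        add_le_add (rademacherComplexity_comp_le u near)
          (rademacherComplexity_le_of_log_card_le hρ hL hnear hcard)

lemma rademacherComplexity_le_of_chain {I : ℕ → Type*} [∀ j, Finite (I j)] [∀ j, Nonempty (I j)]
    {t : ∀ j, I j → κ → ℝ} {r M : ℝ} (hr : 0 < r) (hM : 0 < M)
    (hcard : ∀ j, log (Nat.card (I j)) ≤ M * ((j : ℝ) + 1) ^ 2)
    (hbase : ∀ i, ∑ k, t 0 i k ^ 2 ≤ r ^ 2)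
    (hstep : ∀ j i, ∃ i', ∑ k, (t (j + 1) i k - t j i' k) ^ 2 ≤ (r / 2 ^ j) ^ 2) (J : ℕ) :
    rademacherComplexity (t J) ≤ 7 * r * √(2 * M) := by
  have sqrt_eq : ∀ j : ℕ, √(2 * (M * ((j : ℝ) + 1) ^ 2)) = (j + 1) * √(2 * M) := fun j => by
    rw [← mul_assoc, sqrt_mul (by positivity), sqrt_sq (by positivity), mul_comm]
  -- `(2 * j + 6) / 2 ^ j` is the tail `∑ i ≥ j, (i + 2) / 2 ^ i` of the chain.
  have partial_sum : rademacherComplexity (t J) ≤ r * √(2 * M) * (7 - (2 * J + 6) / 2 ^ J) := by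
    induction J with
    | zero =>
      have := rademacherComplexity_le_of_log_card_le hr (by positivity) hbase (hcard 0)
      rw [sqrt_eq] at this
      norm_num at this ⊢
      exact this
    | succ j ih =>
      have := rademacherComplexity_le_add_of_approx (by positivity) (by positivity) (hstep j)
        (hcard (j + 1))
      rw [sqrt_eq] at this
      refine this.trans ((add_le_add_left ih _).trans_eq ?_)
      push_cast
      field_simp
      ring
  refine partial_sum.trans ?_
  rw [mul_comm (r * _), mul_assoc]
  gcongr
  exact sub_le_self _ (by positivity)

end Rademacher

section VCChaining

variable {κ : Type*} [Fintype κ] [DecidableEq κ] {V : ℕ} {B R : ℝ}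

lemma sum_indicator_sub_sq_le {v : κ → ℝ} (hv : ∀ k, |v k| ≤ B) (s t : Finset κ) :
    ∑ k, ((s : Set κ).indicator v k - (t : Set κ).indicator v k) ^ 2
      ≤ B ^ 2 * (s ∆ t).card := by
  have pointwise : ∀ k, ((s : Set κ).indicator v k - (t : Set κ).indicator v k) ^ 2
      ≤ if k ∈ s ∆ t then B ^ 2 else 0 := by
    intro k
    have hvk : v k ^ 2 ≤ B ^ 2 := sq_le_sq' (abs_le.1 (hv k)).1 (abs_le.1 (hv k)).2
    by_cases hs : k ∈ s <;> by_cases ht : k ∈ t <;>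
      simp [Finset.mem_symmDiff, hs, ht, hvk]
  calc ∑ k, ((s : Set κ).indicator v k - (t : Set κ).indicator v k) ^ 2
      ≤ ∑ k, if k ∈ s ∆ t then B ^ 2 else 0 := Finset.sum_le_sum fun k _ => pointwise k
    _ = B ^ 2 * (s ∆ t).card := by
        rw [Finset.sum_ite_mem, Finset.univ_inter, Finset.sum_const, nsmul_eq_mul, mul_comm]

variable [Nonempty κ] {𝒜 : Finset (Finset κ)} {v w : κ → ℝ}

lemma log_card_le_of_dyadic_separated (hV : 𝒜.vcDim ≤ V) (hV0 : 0 < V)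
    (hR : 0 < R) (hRB : R ≤ B) (j : ℕ)
    (hsep : (𝒜 : Set (Finset κ)).Pairwise fun s t =>
      (R / B) ^ 2 / 4 ^ j * Fintype.card κ ≤ (s ∆ t).card) :
    log 𝒜.card ≤ 8 * (V * (1 + log (B / R))) * ((j : ℝ) + 1) ^ 2 := by
  have hB : 0 < B := hR.trans_le hRB
  have hscale : (R / B) ^ 2 / 4 ^ j ≤ 1 := by
    have hRB1 : (R / B) ^ 2 ≤ 1 := pow_le_one₀ (by positivity) ((div_le_one hB).2 hRB)
    exact (div_le_self (by positivity) (one_le_pow₀ (by norm_num))).trans hRB1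
  have hpack := log_card_le_of_separated hV (by positivity) hscale hsep
  set ℓ := 1 + log (B / R) with hℓ
  have hℓ1 : 1 ≤ ℓ := by
    rw [hℓ]; linarith [log_nonneg ((one_le_div hR).2 hRB)]
  have hV1 : (1 : ℝ) ≤ V := by exact_mod_cast hV0
  have hlog : log (4 / ((R / B) ^ 2 / 4 ^ j)) = (j + 1) * log 4 + 2 * log (B / R) := by
    have : 4 / ((R / B) ^ 2 / 4 ^ j) = 4 ^ (j + 1) * (B / R) ^ 2 := by field_simp; ring
    rw [this, log_mul (by positivity) (by positivity), log_pow, log_pow]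
    push_cast; ring
  have hlog4 : log 4 ≤ 1.4 := by
    rw [show (4 : ℝ) = 2 ^ 2 by norm_num, log_pow]
    push_cast; linarith [log_two_lt_d9]
  have : (1 : ℝ) ≤ j + 1 := by simp
  have hscale_log : log (4 / ((R / B) ^ 2 / 4 ^ j)) ≤ 3.4 * (ℓ * (j + 1)) := by
    rw [hlog]
    nlinarith
  have hsq : ℓ * (j + 1) ≤ ℓ * ((j : ℝ) + 1) ^ 2 := by gcongr; nlinarith
  have hone : 1 ≤ ℓ * ((j : ℝ) + 1) ^ 2 := by nlinarith
  calc log 𝒜.card ≤ 2 * V * log (4 / ((R / B) ^ 2 / 4 ^ j)) + 1 / 2 := hpack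
    _ ≤ 2 * V * (3.4 * (ℓ * ((j : ℝ) + 1) ^ 2)) + V * (ℓ * ((j : ℝ) + 1) ^ 2) := by
        gcongr
        · exact hscale_log.trans (by gcongr)
        · nlinarith
    _ ≤ 8 * (V * ℓ) * ((j : ℝ) + 1) ^ 2 := by nlinarith

lemma exists_dyadic_nets (hV : 𝒜.vcDim ≤ V) (hV0 : 0 < V) (hR : 0 < R) (hRB : R ≤ B)
    (hv : ∀ k, |v k| ≤ B) :
    ∃ 𝒩 : ℕ → Finset (Finset κ), (∀ j, 𝒩 j ⊆ 𝒜) ∧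
      (∀ j, log (𝒩 j).card ≤ 8 * (V * (1 + log (B / R))) * ((j : ℝ) + 1) ^ 2) ∧
      (∀ j, ∀ s ∈ 𝒜, ∃ t ∈ 𝒩 j, ∑ k, ((s : Set κ).indicator v k - (t : Set κ).indicator v k) ^ 2
        ≤ (R * √(Fintype.card κ) / 2 ^ j) ^ 2) ∧
      ∃ J, 𝒜 ⊆ 𝒩 J := by
  have hB : 0 < B := hR.trans_le hRB
  have hscale : ∀ j : ℕ, 0 < (R / B) ^ 2 / 4 ^ j * Fintype.card κ := fun j => by positivity
  choose 𝒩 hsub hsep hnet using fun j => exists_separated_net 𝒜 (hscale j)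
  refine ⟨𝒩, hsub, fun j => log_card_le_of_dyadic_separated
    ((Finset.vcDim_mono (hsub j)).trans hV) hV0 hR hRB j (hsep j), fun j s hs => ?_, ?_⟩
  · obtain ⟨t, ht, hst⟩ := hnet j s hs
    refine ⟨t, ht, ?_⟩
    have four_pow : (4 : ℝ) ^ j = (2 ^ j) ^ 2 := by rw [← pow_mul, mul_comm, pow_mul]; norm_num
    calc ∑ k, ((s : Set κ).indicator v k - (t : Set κ).indicator v k) ^ 2
        ≤ B ^ 2 * (s ∆ t).card := sum_indicator_sub_sq_le hv _ _
      _ ≤ B ^ 2 * ((R / B) ^ 2 / 4 ^ j * Fintype.card κ) := by gcongr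
      _ = (R * √(Fintype.card κ) / 2 ^ j) ^ 2 := by
          simp only [div_pow, mul_pow, sq_sqrt (Nat.cast_nonneg _), four_pow]
          field_simp
  · obtain ⟨J, hJ⟩ := pow_unbounded_of_one_lt ((R / B) ^ 2 * Fintype.card κ)
      (show (1 : ℝ) < 4 by norm_num)
    refine ⟨J, fun s hs => ?_⟩
    obtain ⟨t, ht, hst⟩ := hnet J s hs
    have hJ1 : (R / B) ^ 2 / 4 ^ J * Fintype.card κ < 1 := by
      rwa [div_mul_eq_mul_div, div_lt_one (by positivity)]
    have hcard : (s ∆ t).card < 1 := by exact_mod_cast hst.trans hJ1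
    rwa [symmDiff_eq_bot.1 (Finset.card_eq_zero.1 (Nat.lt_one_iff.1 hcard))]

lemma rademacherComplexity_indicator_sub_le (hne : 𝒜.Nonempty) (hV : 𝒜.vcDim ≤ V) (hV0 : 0 < V)
    (hR : 0 < R) (hRB : R ≤ B) (hv : ∀ k, |v k| ≤ B)
    (hrad : ∀ s ∈ 𝒜, ∑ k, ((s : Set κ).indicator v k - w k) ^ 2 ≤ Fintype.card κ * R ^ 2) :
    rademacherComplexity (fun (s : 𝒜) k => ((s : Finset κ) : Set κ).indicator v k - w k)
      ≤ 28 * R * √(Fintype.card κ * (V * (1 + log (B / R)))) := by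
  have hℓ : 0 < 1 + log (B / R) := by linarith [log_nonneg ((one_le_div hR).2 hRB)]
  obtain ⟨𝒩, hsub, hlog, hnet, J, hJ⟩ := exists_dyadic_nets hV hV0 hR hRB hv
  have : ∀ j, Nonempty (𝒩 j) := fun j =>
    let ⟨s, hs⟩ := hne
    let ⟨t, ht, _⟩ := hnet j s hs
    ⟨⟨t, ht⟩⟩
  have : Nonempty 𝒜 := hne.to_subtype
  have chain := rademacherComplexity_le_of_chain (I := fun j => 𝒩 j)
    (t := fun j s k => ((s : Finset κ) : Set κ).indicator v k - w k)
    (r := R * √(Fintype.card κ)) (M := 8 * (V * (1 + log (B / R)))) (by positivity) (by positivity)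
    (fun j => by simpa using hlog j)
    (fun s => (hrad s (hsub 0 s.2)).trans_eq
      (by rw [mul_pow, sq_sqrt (Nat.cast_nonneg _), mul_comm]))
    (fun j s => by
      obtain ⟨t, ht, hst⟩ := hnet j s (hsub _ s.2)
      exact ⟨⟨t, ht⟩, by simpa only [sub_sub_sub_cancel_right] using hst⟩) J
  calc rademacherComplexity (fun (s : 𝒜) k => ((s : Finset κ) : Set κ).indicator v k - w k)
      ≤ rademacherComplexity (fun (s : 𝒩 J) k => ((s : Finset κ) : Set κ).indicator v k - w k) :=
        rademacherComplexity_comp_le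
          (fun (s : 𝒩 J) k => ((s : Finset κ) : Set κ).indicator v k - w k)
          fun s : 𝒜 => (⟨s, hJ s.2⟩ : 𝒩 J)
    _ ≤ 7 * (R * √(Fintype.card κ)) * √(2 * (8 * (V * (1 + log (B / R))))) := chain
    _ = 28 * R * √(Fintype.card κ * (V * (1 + log (B / R)))) := by
        rw [← mul_assoc 2, sqrt_mul (by norm_num),
          sqrt_mul (Nat.cast_nonneg (Fintype.card κ)),
          show √(2 * 8 : ℝ) = 4 by rw [sqrt_eq_iff_mul_self_eq] <;> norm_num]
        ring

lemma rademacherComplexity_classifier_mul_sub_le {α ι : Type*} [Nonempty ι] {g : ι → α → ℝ}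
    (hg : ∀ i a, g i a = 0 ∨ g i a = 1)
    (hV : ∀ x : Fin (V + 1) → α, ¬ Shatters (Set.range g) x) (hV0 : 0 < V) (x : κ → α)
    (hR : 0 < R) (hv : ∀ k, |v k| ≤ B)
    (hrad : ∀ i, ∑ k, (g i (x k) * v k - w k) ^ 2 ≤ Fintype.card κ * R ^ 2) :
    rademacherComplexity (fun i k => g i (x k) * v k - w k)
      ≤ 28 * R * √(Fintype.card κ * (V * (1 + log (max (B / R) 1)))) := by
  classical
  let pattern : ι → Finset κ := fun i => {k | g i (x k) = 1}
  let 𝒜 : Finset (Finset κ) := (Set.toFinite (Set.range pattern)).toFinset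
  have mem_𝒜 : ∀ i, pattern i ∈ 𝒜 := fun i => by simp [𝒜]
  have exists_of_mem : ∀ s ∈ 𝒜, ∃ i, pattern i = s := fun s hs => by simpa [𝒜] using hs
  have value_eq : ∀ i k, g i (x k) = if k ∈ pattern i then 1 else 0 := fun i k => by
    rcases hg i (x k) with h | h <;> simp [pattern, h]
  have indicator_eq : ∀ i k, (pattern i : Set κ).indicator v k = g i (x k) * v k := fun i k => by
    simp [Set.indicator_apply, value_eq i k]
  have hvc : 𝒜.vcDim ≤ V := vcDim_le_of_not_shatters hV x fun s hs =>
    let ⟨i, hi⟩ := exists_of_mem s hs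
    ⟨g i, Set.mem_range_self i, hi ▸ value_eq i⟩
  have hbound := rademacherComplexity_indicator_sub_le (B := max B R) (w := w)
    ⟨_, mem_𝒜 (Classical.arbitrary ι)⟩ hvc hV0 hR (le_max_right _ _)
    (fun k => (hv k).trans (le_max_left _ _)) fun s hs => by
      obtain ⟨i, rfl⟩ := exists_of_mem s hs
      simpa only [indicator_eq] using hrad i
  rw [← max_div_div_right hR.le, div_self hR.ne'] at hbound
  calc rademacherComplexity (fun i k => g i (x k) * v k - w k)
      = rademacherComplexity ((fun (s : 𝒜) k => ((s : Finset κ) : Set κ).indicator v k - w k) ∘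
          fun i => ⟨pattern i, mem_𝒜 i⟩) := by
        simp only [Function.comp_def, indicator_eq]
    _ ≤ _ := rademacherComplexity_comp_le _ _
    _ ≤ _ := hbound

end VCChaining

section BoundedSuprema

variable {ι : Type*} {a : ι → ℝ} {M : ℝ}

lemma bddAbove_range_of_abs_le (ha : ∀ i, |a i| ≤ M) : BddAbove (Set.range a) :=
  ⟨M, Set.forall_mem_range.2 fun i => (abs_le.1 (ha i)).2⟩

lemma abs_iSup_le [Nonempty ι] (ha : ∀ i, |a i| ≤ M) : |⨆ i, a i| ≤ M := by
  refine abs_le.2 ⟨?_, ciSup_le fun i => (abs_le.1 (ha i)).2⟩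
  exact (abs_le.1 (ha (Classical.arbitrary ι))).1.trans
    (le_ciSup (bddAbove_range_of_abs_le ha) _)

lemma abs_sum_le_card_mul [Fintype ι] (ha : ∀ i, |a i| ≤ M) :
    |∑ i, a i| ≤ Fintype.card ι * M := by
  simpa using (Finset.abs_sum_le_sum_abs a Finset.univ).trans (Finset.sum_le_sum fun i _ => ha i)

lemma integrable_iSup_of_abs_le {Ω : Type*} [MeasurableSpace Ω] {μ : Measure Ω} [IsFiniteMeasure μ]
    [Countable ι] [Nonempty ι] {F : ι → Ω → ℝ} (hF : ∀ i, Measurable (F i))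
    (hM : ∀ i ω, |F i ω| ≤ M) : Integrable (fun ω => ⨆ i, F i ω) μ :=
  .of_bound (Measurable.iSup hF).aestronglyMeasurable M
    (ae_of_all _ fun ω => abs_iSup_le fun i => hM i ω)

end BoundedSuprema

section Symmetrization

variable {κ Ω ι : Type*} [Fintype κ] {f : ι → Ω → ℝ} {h : Ω → ℝ} {M : ℝ}

lemma abs_sum_sign_mul_le (hM : ∀ x, |h x| ≤ M) (ε : κ → ℤˣ) (ω : κ → Ω) :
    |∑ k, ((ε k : ℤ) : ℝ) * h (ω k)| ≤ Fintype.card κ * M :=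
  abs_sum_le_card_mul fun k => by
    rcases Int.units_eq_one_or (ε k) with hε | hε <;> simpa [hε] using hM (ω k)

lemma abs_sum_sub_le (hM : ∀ x, |h x| ≤ M) (p : (κ → Ω) × (κ → Ω)) :
    |∑ k, (h (p.1 k) - h (p.2 k))| ≤ Fintype.card κ * (2 * M) :=
  abs_sum_le_card_mul fun k =>
    (abs_sub _ _).trans (by linarith [hM (p.1 k), hM (p.2 k)])

/-- Exchanges the `k`-th coordinates of the two samples whenever `ε k = -1`; the symmetrization
argument rests on its preserving the joint law of two i.i.d. samples. -/
def swapCoordinates (ε : κ → ℤˣ) (p : (κ → Ω) × (κ → Ω)) : (κ → Ω) × (κ → Ω) :=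
  (fun k => if ε k = 1 then p.1 k else p.2 k, fun k => if ε k = 1 then p.2 k else p.1 k)

lemma sum_sub_swapCoordinates (h : Ω → ℝ) (ε : κ → ℤˣ) (p : (κ → Ω) × (κ → Ω)) :
    ∑ k, (h ((swapCoordinates ε p).1 k) - h ((swapCoordinates ε p).2 k))
      = ∑ k, ((ε k : ℤ) : ℝ) * h (p.1 k) + ∑ k, (((-ε) k : ℤ) : ℝ) * h (p.2 k) := by
  rw [← Finset.sum_add_distrib]
  refine Finset.sum_congr rfl fun k _ => ?_
  rcases Int.units_eq_one_or (ε k) with hε | hε <;> simp [swapCoordinates, hε] <;> ring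

variable [MeasurableSpace Ω]

lemma measurable_sum_sign_mul (hh : Measurable h) (ε : κ → ℤˣ) :
    Measurable fun ω : κ → Ω => ∑ k, ((ε k : ℤ) : ℝ) * h (ω k) := by
  fun_prop

lemma measurable_sum_sub (hh : Measurable h) :
    Measurable fun p : (κ → Ω) × (κ → Ω) => ∑ k, (h (p.1 k) - h (p.2 k)) := by
  fun_prop

lemma measurable_sum_comp_eval (hh : Measurable h) :
    Measurable fun ω : κ → Ω => ∑ k, h (ω k) := by
  fun_prop

variable {P : Measure Ω} [IsProbabilityMeasure P]

lemma abs_sub_integral_le (hM : ∀ x, |h x| ≤ M) (x : Ω) :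
    |h x - ∫ y, h y ∂P| ≤ 2 * M := by
  have h_int : |∫ y, h y ∂P| ≤ M := by
    simpa using norm_integral_le_of_norm_le_const (μ := P) (f := h) (C := M) (ae_of_all _ hM)
  linarith [abs_sub (h x) (∫ y, h y ∂P), hM x]

lemma measurePreserving_swapCoordinates (ε : κ → ℤˣ) :
    MeasurePreserving (swapCoordinates (Ω := Ω) ε)
      ((Measure.pi fun _ => P).prod (Measure.pi fun _ => P))
      ((Measure.pi fun _ => P).prod (Measure.pi fun _ => P)) := by
  have zip := measurePreserving_arrowProdEquivProdArrow Ω Ω κ (fun _ => P) (fun _ => P)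
  have swap : MeasurePreserving (fun (z : κ → Ω × Ω) k => (if ε k = 1 then id else Prod.swap) (z k))
      (Measure.pi fun _ => P.prod P) (Measure.pi fun _ => P.prod P) := by
    refine measurePreserving_pi (fun _ => P.prod P) (fun _ => P.prod P)
      (f := fun k => if ε k = 1 then id else Prod.swap) fun k => ?_
    by_cases h : ε k = 1
    · simpa only [h, if_true] using MeasurePreserving.id (P.prod P)
    · simpa only [h, if_false] using Measure.measurePreserving_swap (μ := P) (ν := P)
  convert (zip.comp swap).comp zip.symm using 1
  funext p
  ext k <;> by_cases h : ε k = 1 <;>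
    simp [swapCoordinates, h, MeasurableEquiv.arrowProdEquivProdArrow,
      Equiv.arrowProdEquivProdArrow]

lemma sum_sub_integral_eq (hh : Measurable h) (hM : ∀ x, |h x| ≤ M) (ω : κ → Ω) :
    ∑ k, (h (ω k) - ∫ x, h x ∂P)
      = ∫ ω' : κ → Ω, ∑ k, (h (ω k) - h (ω' k)) ∂(Measure.pi fun _ => P) := by
  have h_int : ∀ k : κ, Integrable (fun ω' : κ → Ω => h (ω' k)) (Measure.pi fun _ => P) :=
    fun k => .of_bound (hh.comp (measurable_pi_apply k)).aestronglyMeasurable M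
      (ae_of_all _ fun ω' => hM (ω' k))
  have hsub : ∀ k : κ, Integrable (fun ω' : κ → Ω => h (ω k) - h (ω' k))
      (Measure.pi fun _ => P) := fun k => (integrable_const _).sub (h_int k)
  rw [integral_finsetSum _ fun k _ => hsub k]
  refine Finset.sum_congr rfl fun k _ => ?_
  rw [integral_sub (integrable_const _) (h_int k), integral_comp_eval hh.aestronglyMeasurable]
  simp

variable [Countable ι] [Nonempty ι]

lemma integrable_iSup_sum_sub_integral (hf : ∀ i, Measurable (f i)) (hM : ∀ i x, |f i x| ≤ M) :
    Integrable (fun ω : κ → Ω => ⨆ i, ∑ k, (f i (ω k) - ∫ x, f i x ∂P))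
      (Measure.pi fun _ => P) :=
  integrable_iSup_of_abs_le (fun i => measurable_sum_comp_eval ((hf i).sub_const _))
    fun i ω => abs_sum_le_card_mul fun k => abs_sub_integral_le (hM i) (ω k)

lemma integrable_iSup_sum_sign_mul (hf : ∀ i, Measurable (f i)) (hM : ∀ i x, |f i x| ≤ M)
    (ε : κ → ℤˣ) :
    Integrable (fun ω : κ → Ω => ⨆ i, ∑ k, ((ε k : ℤ) : ℝ) * f i (ω k)) (Measure.pi fun _ => P) :=
  integrable_iSup_of_abs_le (fun i => measurable_sum_sign_mul (hf i) ε)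
    fun i ω => abs_sum_sign_mul_le (hM i) ε ω

lemma integrable_iSup_sum_sub (hf : ∀ i, Measurable (f i)) (hM : ∀ i x, |f i x| ≤ M) :
    Integrable (fun p : (κ → Ω) × (κ → Ω) => ⨆ i, ∑ k, (f i (p.1 k) - f i (p.2 k)))
      ((Measure.pi fun _ => P).prod (Measure.pi fun _ => P)) :=
  integrable_iSup_of_abs_le (fun i => measurable_sum_sub (hf i)) fun i p => abs_sum_sub_le (hM i) p

lemma integral_iSup_sum_sub_integral_le_twoSample (hf : ∀ i, Measurable (f i))
    (hM : ∀ i x, |f i x| ≤ M) :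
    ∫ ω : κ → Ω, (⨆ i, ∑ k, (f i (ω k) - ∫ x, f i x ∂P)) ∂(Measure.pi fun _ => P)
      ≤ ∫ p : (κ → Ω) × (κ → Ω), (⨆ i, ∑ k, (f i (p.1 k) - f i (p.2 k)))
          ∂((Measure.pi fun _ => P).prod (Measure.pi fun _ => P)) := by
  have twoSample_int := integrable_iSup_sum_sub (κ := κ) (P := P) hf hM
  rw [integral_prod _ twoSample_int]
  refine integral_mono (integrable_iSup_sum_sub_integral hf hM) twoSample_int.integral_prod_left
    fun ω => ciSup_le fun i => ?_
  rw [sum_sub_integral_eq (hf i) (hM i)]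
  have hmeas := fun i => (measurable_sum_sub (κ := κ) (hf i)).comp (measurable_prodMk_left (x := ω))
  exact integral_mono
    (.of_bound (hmeas i).aestronglyMeasurable _
      (ae_of_all _ fun ω' => abs_sum_sub_le (hM i) (ω, ω')))
    (integrable_iSup_of_abs_le hmeas fun i ω' => abs_sum_sub_le (hM i) (ω, ω'))
    fun ω' => le_ciSup (bddAbove_range_of_abs_le fun i => abs_sum_sub_le (hM i) (ω, ω')) i

lemma integral_twoSample_le (hf : ∀ i, Measurable (f i)) (hM : ∀ i x, |f i x| ≤ M) (ε : κ → ℤˣ) :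
    ∫ p : (κ → Ω) × (κ → Ω), (⨆ i, ∑ k, (f i (p.1 k) - f i (p.2 k)))
        ∂((Measure.pi fun _ => P).prod (Measure.pi fun _ => P))
      ≤ (∫ ω : κ → Ω, (⨆ i, ∑ k, ((ε k : ℤ) : ℝ) * f i (ω k)) ∂(Measure.pi fun _ => P))
        + ∫ ω : κ → Ω, (⨆ i, ∑ k, (((-ε) k : ℤ) : ℝ) * f i (ω k)) ∂(Measure.pi fun _ => P) := by
  have hswap := measurePreserving_swapCoordinates (P := P) ε
  have twoSample_int := integrable_iSup_sum_sub (κ := κ) (P := P) hf hM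
  have int_fst := integrable_iSup_sum_sign_mul (P := P) hf hM ε
  have int_snd := integrable_iSup_sum_sign_mul (P := P) hf hM (-ε)
  set Q : Measure (κ → Ω) := Measure.pi fun _ => P
  calc ∫ p, (⨆ i, ∑ k, (f i (p.1 k) - f i (p.2 k))) ∂(Q.prod Q)
      = ∫ p, (⨆ i, (∑ k, ((ε k : ℤ) : ℝ) * f i (p.1 k)
          + ∑ k, (((-ε) k : ℤ) : ℝ) * f i (p.2 k))) ∂(Q.prod Q) := by
        conv_lhs => rw [← hswap.map_eq]
        rw [integral_map hswap.measurable.aemeasurable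
          (Measurable.iSup fun i => measurable_sum_sub (hf i)).aestronglyMeasurable]
        simp only [sum_sub_swapCoordinates]
    _ ≤ ∫ p, ((⨆ i, ∑ k, ((ε k : ℤ) : ℝ) * f i (p.1 k))
          + ⨆ i, ∑ k, (((-ε) k : ℤ) : ℝ) * f i (p.2 k)) ∂(Q.prod Q) := by
        refine integral_mono ?_ ((int_fst.comp_fst Q).add (int_snd.comp_snd Q))
          fun p => ciSup_le fun i => ?_
        · simp only [← sum_sub_swapCoordinates]
          exact hswap.integrable_comp_of_integrable twoSample_int
        · exact add_le_add
            (le_ciSup (bddAbove_range_of_abs_le fun i => abs_sum_sign_mul_le (hM i) ε p.1) i)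
            (le_ciSup (bddAbove_range_of_abs_le fun i => abs_sum_sign_mul_le (hM i) (-ε) p.2) i)
    _ = _ := by
        rw [integral_add (int_fst.comp_fst Q) (int_snd.comp_snd Q),
          integral_fun_fst fun ω : κ → Ω => ⨆ i, ∑ k, ((ε k : ℤ) : ℝ) * f i (ω k),
          integral_fun_snd fun ω : κ → Ω => ⨆ i, ∑ k, (((-ε) k : ℤ) : ℝ) * f i (ω k)]
        simp

variable [DecidableEq κ]

lemma integrable_rademacherComplexity (hf : ∀ i, Measurable (f i)) (hM : ∀ i x, |f i x| ≤ M) :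
    Integrable (fun ω : κ → Ω => rademacherComplexity fun i k => f i (ω k))
      (Measure.pi fun _ => P) := by
  simp only [rademacherComplexity, Fintype.expect_eq_sum_div_card]
  exact (integrable_finsetSum _ fun ε _ => integrable_iSup_sum_sign_mul hf hM ε).div_const _

lemma integral_rademacherComplexity (hf : ∀ i, Measurable (f i)) (hM : ∀ i x, |f i x| ≤ M) :
    ∫ ω : κ → Ω, rademacherComplexity (fun i k => f i (ω k)) ∂(Measure.pi fun _ => P)
      = 𝔼 ε : κ → ℤˣ, ∫ ω : κ → Ω, (⨆ i, ∑ k, ((ε k : ℤ) : ℝ) * f i (ω k))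
          ∂(Measure.pi fun _ => P) := by
  simp only [rademacherComplexity, Fintype.expect_eq_sum_div_card]
  rw [integral_div, integral_finsetSum _ fun ε _ => integrable_iSup_sum_sign_mul hf hM ε]

lemma integral_iSup_sum_sub_integral_le_rademacherComplexity (hf : ∀ i, Measurable (f i))
    (hM : ∀ i x, |f i x| ≤ M) :
    ∫ ω : κ → Ω, (⨆ i, ∑ k, (f i (ω k) - ∫ x, f i x ∂P)) ∂(Measure.pi fun _ => P)
      ≤ 2 * ∫ ω : κ → Ω, rademacherComplexity (fun i k => f i (ω k)) ∂(Measure.pi fun _ => P) := by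
  refine (integral_iSup_sum_sub_integral_le_twoSample hf hM).trans ?_
  rw [integral_rademacherComplexity hf hM]
  refine (Finset.le_expect (s := (Finset.univ : Finset (κ → ℤˣ))) Finset.univ_nonempty
    fun ε _ => integral_twoSample_le hf hM ε).trans_eq ?_
  rw [Finset.expect_add_distrib, two_mul]
  congr 1
  exact Fintype.expect_equiv (Equiv.neg _) _ _ fun ε => rfl

end Symmetrization

section Localization

variable {κ Ω ι : Type*} [Fintype κ] {f : ι → Ω → ℝ} {σ M : ℝ}

/-- An upper bound for both `σ` and the largest empirical `L²` norm of the `f i` on the sample `ω`.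
It is affine in `⨆ i, ∑ k, f i (ω k) ^ 2`, unlike the maximum of the two, so its expectation is
controlled by that of the supremum. -/
def empiricalRadius (f : ι → Ω → ℝ) (σ : ℝ) (ω : κ → Ω) : ℝ :=
  σ + (⨆ i, ∑ k, f i (ω k) ^ 2) / (Fintype.card κ * σ)

lemma le_empiricalRadius (hσ : 0 < σ) (ω : κ → Ω) : σ ≤ empiricalRadius f σ ω := by
  have : 0 ≤ ⨆ i, ∑ k, f i (ω k) ^ 2 :=
    Real.iSup_nonneg fun i => Finset.sum_nonneg fun k _ => sq_nonneg _
  exact le_add_of_nonneg_right (by positivity)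

lemma sq_le_sq_of_abs_le (hM : ∀ i x, |f i x| ≤ M) (i : ι) (x : Ω) : |f i x ^ 2| ≤ M ^ 2 := by
  rw [abs_pow]
  exact pow_le_pow_left₀ (abs_nonneg _) (hM i x) 2

lemma sum_sq_le_empiricalRadius [Nonempty κ] (hM : ∀ i x, |f i x| ≤ M) (hσ : 0 < σ) (ω : κ → Ω)
    (i : ι) : ∑ k, f i (ω k) ^ 2 ≤ Fintype.card κ * empiricalRadius f σ ω ^ 2 := by
  have hle : ∑ k, f i (ω k) ^ 2 ≤ ⨆ i, ∑ k, f i (ω k) ^ 2 :=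
    le_ciSup (bddAbove_range_of_abs_le fun i =>
      abs_sum_le_card_mul fun k => sq_le_sq_of_abs_le hM i (ω k)) i
  refine hle.trans ?_
  obtain ⟨q, hq⟩ : ∃ q, (⨆ i, ∑ k, f i (ω k) ^ 2) = Fintype.card κ * (σ * q) :=
    ⟨(⨆ i, ∑ k, f i (ω k) ^ 2) / (Fintype.card κ * σ), by field_simp⟩
  have hradius : empiricalRadius f σ ω = σ + q := by
    rw [empiricalRadius, hq]
    field_simp
  rw [hradius, hq]
  gcongr
  nlinarith [sq_nonneg σ, sq_nonneg q, sq_nonneg (σ + q)]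

lemma sum_sq_sq_le_empiricalRadius [Nonempty κ] (hM : ∀ i x, |f i x| ≤ M) (hσ : 0 < σ)
    (ω : κ → Ω) (i : ι) :
    ∑ k, (f i (ω k) ^ 2) ^ 2 ≤ Fintype.card κ * (M * empiricalRadius f σ ω) ^ 2 :=
  calc ∑ k, (f i (ω k) ^ 2) ^ 2
      ≤ ∑ k, M ^ 2 * f i (ω k) ^ 2 := by
        gcongr with k
        rw [sq (_ ^ 2)]
        exact mul_le_mul_of_nonneg_right ((le_abs_self _).trans (sq_le_sq_of_abs_le hM i (ω k)))
          (sq_nonneg _)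
    _ = M ^ 2 * ∑ k, f i (ω k) ^ 2 := (Finset.mul_sum ..).symm
    _ ≤ M ^ 2 * (Fintype.card κ * empiricalRadius f σ ω ^ 2) := by
        gcongr
        exact sum_sq_le_empiricalRadius hM hσ ω i
    _ = _ := by ring

variable [MeasurableSpace Ω] {P : Measure Ω} [IsProbabilityMeasure P] [Countable ι] [Nonempty ι]

lemma integrable_iSup_sum_sq (hf : ∀ i, Measurable (f i)) (hM : ∀ i x, |f i x| ≤ M) :
    Integrable (fun ω : κ → Ω => ⨆ i, ∑ k, f i (ω k) ^ 2) (Measure.pi fun _ => P) :=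
  integrable_iSup_of_abs_le (fun i => measurable_sum_comp_eval ((hf i).pow_const 2))
    fun i ω => abs_sum_le_card_mul fun k => sq_le_sq_of_abs_le hM i (ω k)

lemma integrable_empiricalRadius (hf : ∀ i, Measurable (f i)) (hM : ∀ i x, |f i x| ≤ M) :
    Integrable (fun ω : κ → Ω => empiricalRadius f σ ω) (Measure.pi fun _ => P) :=
  (integrable_const σ).add ((integrable_iSup_sum_sq hf hM).div_const _)

lemma integral_iSup_sum_sq_le (hf : ∀ i, Measurable (f i)) (hM : ∀ i x, |f i x| ≤ M)
    (hvar : ∀ i, ∫ x, f i x ^ 2 ∂P ≤ σ ^ 2) :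
    ∫ ω : κ → Ω, (⨆ i, ∑ k, f i (ω k) ^ 2) ∂(Measure.pi fun _ => P)
      ≤ (∫ ω : κ → Ω, (⨆ i, ∑ k, (f i (ω k) ^ 2 - ∫ x, f i x ^ 2 ∂P)) ∂(Measure.pi fun _ => P))
        + Fintype.card κ * σ ^ 2 := by
  have hsq_meas : ∀ i, Measurable fun x => f i x ^ 2 := fun i => (hf i).pow_const 2
  have hcentered := integrable_iSup_sum_sub_integral (κ := κ) (P := P) hsq_meas
    (sq_le_sq_of_abs_le hM)
  calc ∫ ω : κ → Ω, (⨆ i, ∑ k, f i (ω k) ^ 2) ∂(Measure.pi fun _ => P)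
      ≤ ∫ ω : κ → Ω, ((⨆ i, ∑ k, (f i (ω k) ^ 2 - ∫ x, f i x ^ 2 ∂P)) + Fintype.card κ * σ ^ 2)
          ∂(Measure.pi fun _ => P) := by
        refine integral_mono (integrable_iSup_sum_sq hf hM) (hcentered.add (integrable_const _))
          fun ω => ciSup_le fun i => ?_
        have hsup := le_ciSup (bddAbove_range_of_abs_le fun i => abs_sum_le_card_mul fun k =>
          abs_sub_integral_le (P := P) (sq_le_sq_of_abs_le hM i) (ω k)) i
        have hmean : Fintype.card κ * ∫ x, f i x ^ 2 ∂P ≤ Fintype.card κ * σ ^ 2 := by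
          gcongr
          exact hvar i
        simp only [Finset.sum_sub_distrib, Finset.sum_const, Finset.card_univ, nsmul_eq_mul]
          at hsup ⊢
        linarith
    _ = _ := by
        rw [integral_add hcentered (integrable_const _)]
        simp

/- The empirical second moments exceed the true ones by a process whose size is itself proportional
to the empirical radius, so its expectation can be absorbed. -/
lemma integral_empiricalRadius_le [Nonempty κ] (hf : ∀ i, Measurable (f i))
    (hM : ∀ i x, |f i x| ≤ M) (hσ : 0 < σ) (hvar : ∀ i, ∫ x, f i x ^ 2 ∂P ≤ σ ^ 2)
    (hself : ∫ ω : κ → Ω, (⨆ i, ∑ k, (f i (ω k) ^ 2 - ∫ x, f i x ^ 2 ∂P))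
        ∂(Measure.pi fun _ => P)
      ≤ Fintype.card κ * σ / 3 * ∫ ω : κ → Ω, empiricalRadius f σ ω ∂(Measure.pi fun _ => P)) :
    ∫ ω : κ → Ω, empiricalRadius f σ ω ∂(Measure.pi fun _ => P) ≤ 3 * σ := by
  have hsum := integral_iSup_sum_sq_le (κ := κ) hf hM hvar
  have hradius : ∫ ω : κ → Ω, empiricalRadius f σ ω ∂(Measure.pi fun _ => P)
      = σ + (∫ ω : κ → Ω, (⨆ i, ∑ k, f i (ω k) ^ 2) ∂(Measure.pi fun _ => P))
          / (Fintype.card κ * σ) := by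
    simp only [empiricalRadius]
    rw [integral_add (integrable_const σ) ((integrable_iSup_sum_sq hf hM).div_const _),
      integral_div]
    simp
  have hn : (0 : ℝ) < Fintype.card κ * σ := by positivity
  have habsorb : (∫ ω : κ → Ω, (⨆ i, ∑ k, f i (ω k) ^ 2) ∂(Measure.pi fun _ => P))
      / (Fintype.card κ * σ)
      ≤ (∫ ω : κ → Ω, empiricalRadius f σ ω ∂(Measure.pi fun _ => P)) / 3 + σ := by
    rw [div_le_iff₀ hn]
    linarith
  linarith

lemma abs_sub_mul_le {a b c C : ℝ} (ha : a = 0 ∨ a = 1) (hb : b = 0 ∨ b = 1) (hc : |c| ≤ C) :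
    |(a - b) * c| ≤ C := by
  have hC : 0 ≤ C := (abs_nonneg c).trans hc
  rcases ha with rfl | rfl <;> rcases hb with rfl | rfl <;> simpa

lemma sub_mul_sq_eq {a b c : ℝ} (ha : a = 0 ∨ a = 1) (hb : b = 0 ∨ b = 1) :
    ((a - b) * c) ^ 2 = a * (c ^ 2 * (1 - 2 * b)) - -(c ^ 2 * b) := by
  rcases ha with rfl | rfl <;> rcases hb with rfl | rfl <;> ring

variable [Nonempty κ] {g : ι → Ω → ℝ} {g₀ u v w : Ω → ℝ} {V : ℕ} {B C : ℝ}

lemma integral_iSup_classifier_mul_sub_le (hgm : ∀ i, Measurable (g i))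
    (hg : ∀ i x, g i x = 0 ∨ g i x = 1)
    (hV : ∀ x : Fin (V + 1) → Ω, ¬ Shatters (Set.range g) x) (hV0 : 0 < V)
    (hvm : Measurable v) (hwm : Measurable w) (hv : ∀ x, |v x| ≤ B)
    (hM : ∀ i x, |g i x * v x - w x| ≤ M) {R : (κ → Ω) → ℝ}
    (hR : Integrable R (Measure.pi fun _ => P)) {R₀ : ℝ} (hR₀ : 0 < R₀) (hRR : ∀ ω, R₀ ≤ R ω)
    (hrad : ∀ ω i, ∑ k, (g i (ω k) * v (ω k) - w (ω k)) ^ 2 ≤ Fintype.card κ * R ω ^ 2) :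
    ∫ ω : κ → Ω, (⨆ i, ∑ k, ((g i (ω k) * v (ω k) - w (ω k)) - ∫ x, (g i x * v x - w x) ∂P))
        ∂(Measure.pi fun _ => P)
      ≤ 56 * √(Fintype.card κ * (V * (1 + log (max (B / R₀) 1))))
        * ∫ ω, R ω ∂(Measure.pi fun _ => P) := by
  classical
  have hfm : ∀ i, Measurable fun x => g i x * v x - w x := fun i =>
    ((hgm i).mul hvm).sub hwm
  have hcomplexity : ∀ ω : κ → Ω,
      rademacherComplexity (fun i k => g i (ω k) * v (ω k) - w (ω k))
        ≤ 28 * √(Fintype.card κ * (V * (1 + log (max (B / R₀) 1)))) * R ω := fun ω => by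
    have hB : 0 ≤ B := (abs_nonneg _).trans (hv (ω (Classical.arbitrary κ)))
    have hRω : 0 < R ω := hR₀.trans_le (hRR ω)
    calc _ ≤ 28 * R ω * √(Fintype.card κ * (V * (1 + log (max (B / R ω) 1)))) :=
          rademacherComplexity_classifier_mul_sub_le hg hV hV0 ω hRω (fun k => hv (ω k)) (hrad ω)
      _ ≤ 28 * R ω * √(Fintype.card κ * (V * (1 + log (max (B / R₀) 1)))) := by
          gcongr
          exact hRR ω
      _ = _ := by ring
  have hsymm := integral_iSup_sum_sub_integral_le_rademacherComplexity (κ := κ) (P := P) hfm hM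
  have hmono := integral_mono (integrable_rademacherComplexity (P := P) hfm hM) (hR.const_mul _)
    hcomplexity
  rw [integral_const_mul] at hmono
  linarith

lemma integral_iSup_sum_sq_sub_mul_le (hgm : ∀ i, Measurable (g i))
    (hg : ∀ i x, g i x = 0 ∨ g i x = 1) (hg₀m : Measurable g₀) (hg₀ : ∀ x, g₀ x = 0 ∨ g₀ x = 1)
    (hV : ∀ x : Fin (V + 1) → Ω, ¬ Shatters (Set.range g) x) (hV0 : 0 < V)
    (hum : Measurable u) (hC : 0 < C) (hu : ∀ x, |u x| ≤ C) (hσ : 0 < σ) :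
    ∫ ω : κ → Ω, (⨆ i, ∑ k, (((g i (ω k) - g₀ (ω k)) * u (ω k)) ^ 2
        - ∫ x, ((g i x - g₀ x) * u x) ^ 2 ∂P)) ∂(Measure.pi fun _ => P)
      ≤ 56 * √(Fintype.card κ * (V * (1 + log (max (C / σ) 1))))
        * (C * ∫ ω : κ → Ω, empiricalRadius (fun i x => (g i x - g₀ x) * u x) σ ω
          ∂(Measure.pi fun _ => P)) := by
  have hfm : ∀ i, Measurable fun x => (g i x - g₀ x) * u x := fun i => ((hgm i).sub hg₀m).mul hum
  have hfC : ∀ i x, |(g i x - g₀ x) * u x| ≤ C := fun i x => abs_sub_mul_le (hg i x) (hg₀ x) (hu x)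
  have hfsq : ∀ i x, ((g i x - g₀ x) * u x) ^ 2
      = g i x * (u x ^ 2 * (1 - 2 * g₀ x)) - -(u x ^ 2 * g₀ x) := fun i x =>
    sub_mul_sq_eq (hg i x) (hg₀ x)
  have hv : ∀ x, |u x ^ 2 * (1 - 2 * g₀ x)| ≤ C ^ 2 := fun x => by
    have hsign : |1 - 2 * g₀ x| = 1 := by
      rcases hg₀ x with h | h <;> norm_num [h]
    rw [abs_mul, hsign, mul_one, abs_pow]
    exact pow_le_pow_left₀ (abs_nonneg _) (hu x) 2
  have hbound := integral_iSup_classifier_mul_sub_le (κ := κ) (P := P)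
    (v := fun x => u x ^ 2 * (1 - 2 * g₀ x)) (w := fun x => -(u x ^ 2 * g₀ x)) hgm hg hV hV0
    ((hum.pow_const 2).mul (measurable_const.sub (hg₀m.const_mul 2)))
    ((hum.pow_const 2).mul hg₀m).neg hv
    (fun i x => hfsq i x ▸ sq_le_sq_of_abs_le hfC i x)
    ((integrable_empiricalRadius (σ := σ) hfm hfC).const_mul C) (mul_pos hC hσ)
    (fun ω => mul_le_mul_of_nonneg_left (le_empiricalRadius hσ ω) hC.le)
    (fun ω i => by
      simpa only [hfsq] using sum_sq_sq_le_empiricalRadius hfC hσ ω i)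
  rw [show C ^ 2 / (C * σ) = C / σ by field_simp, integral_const_mul] at hbound
  simpa only [hfsq] using hbound

lemma integral_iSup_sub_mul_le_of_variance_le (hgm : ∀ i, Measurable (g i))
    (hg : ∀ i x, g i x = 0 ∨ g i x = 1) (hg₀m : Measurable g₀) (hg₀ : ∀ x, g₀ x = 0 ∨ g₀ x = 1)
    (hV : ∀ x : Fin (V + 1) → Ω, ¬ Shatters (Set.range g) x) (hV0 : 0 < V)
    (hum : Measurable u) (hC : 0 < C) (hu : ∀ x, |u x| ≤ C) (hσ : 0 < σ)
    (hvar : ∀ i, ∫ x, ((g i x - g₀ x) * u x) ^ 2 ∂P ≤ σ ^ 2)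
    (hlarge : 168 * C * √(V * (1 + log (max (C / σ) 1))) ≤ √(Fintype.card κ) * σ) :
    ∫ ω : κ → Ω, (⨆ i, ∑ k, ((g i (ω k) - g₀ (ω k)) * u (ω k)
        - ∫ x, (g i x - g₀ x) * u x ∂P)) ∂(Measure.pi fun _ => P)
      ≤ 168 * σ * (√(Fintype.card κ) * √(V * (1 + log (max (C / σ) 1)))) := by
  have hfm : ∀ i, Measurable fun x => (g i x - g₀ x) * u x := fun i => ((hgm i).sub hg₀m).mul hum
  have hfC : ∀ i x, |(g i x - g₀ x) * u x| ≤ C := fun i x => abs_sub_mul_le (hg i x) (hg₀ x) (hu x)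
  have hsqrt : √(Fintype.card κ * (V * (1 + log (max (C / σ) 1))))
      = √(Fintype.card κ) * √(V * (1 + log (max (C / σ) 1))) := sqrt_mul (Nat.cast_nonneg _) _
  have hradius : ∫ ω : κ → Ω, empiricalRadius (fun i x => (g i x - g₀ x) * u x) σ ω
      ∂(Measure.pi fun _ => P) ≤ 3 * σ := by
    refine integral_empiricalRadius_le hfm hfC hσ hvar
      ((integral_iSup_sum_sq_sub_mul_le hgm hg hg₀m hg₀ hV hV0 hum hC hu hσ).trans ?_)
    rw [hsqrt, ← mul_assoc]
    refine mul_le_mul_of_nonneg_right ?_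
      (integral_nonneg fun ω => hσ.le.trans (le_empiricalRadius hσ ω))
    have := mul_le_mul_of_nonneg_left hlarge (sqrt_nonneg (Fintype.card κ : ℝ))
    rw [← mul_assoc √_ √_, mul_self_sqrt (Nat.cast_nonneg _)] at this
    linarith
  have hprocess := integral_iSup_classifier_mul_sub_le (κ := κ) (P := P) (R₀ := σ)
    (w := fun x => g₀ x * u x) hgm hg hV hV0
    hum (hg₀m.mul hum) hu (fun i x => by simpa only [sub_mul] using hfC i x)
    (integrable_empiricalRadius hfm hfC) hσ (le_empiricalRadius hσ)
    (fun ω i => by simpa only [sub_mul] using sum_sq_le_empiricalRadius hfC hσ ω i)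
  simp only [← sub_mul] at hprocess
  rw [hsqrt] at hprocess
  calc _ ≤ _ := hprocess
    _ ≤ 56 * (√(Fintype.card κ) * √(V * (1 + log (max (C / σ) 1)))) * (3 * σ) := by gcongr
    _ = _ := by ring

end Localization

section InversePropensityWeighting

variable {Ω α : Type*} {X : Ω → α} {Y S : Ω → ℝ} {e g g₀ q : α → ℝ} {c e_m : ℝ}

/-- The inverse-propensity weight `1{S = 1} / e(X)`, an unbiased substitute for the unobserved label
`Y` given `X`. -/
def inversePropensityWeight (X : Ω → α) (S : Ω → ℝ) (e : α → ℝ) (ω : Ω) : ℝ :=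
  (if S ω = 1 then 1 else 0) / e (X ω)

/-- The factor by which a change of the prediction at `X` from `1` to `0` changes the SAR loss. -/
def sarMultiplier (X : Ω → α) (S : Ω → ℝ) (e : α → ℝ) (ω : Ω) : ℝ :=
  2 * inversePropensityWeight X S e ω - 1

lemma rSAR_sub_rSAR (hg : ∀ x, g x = 0 ∨ g x = 1) (hg₀ : ∀ x, g₀ x = 0 ∨ g₀ x = 1) (ω : Ω) :
    rSAR e g₀ (X ω, S ω) - rSAR e g (X ω, S ω)
      = (g (X ω) - g₀ (X ω)) * sarMultiplier X S e ω := by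
  unfold rSAR sarMultiplier inversePropensityWeight
  rcases hg (X ω) with h | h <;> rcases hg₀ (X ω) with h' | h' <;> simp [h, h'] <;> ring

lemma sarMultiplier_sq_eq (ω : Ω) :
    sarMultiplier X S e ω ^ 2
      = 4 * ((e (X ω))⁻¹ - 1) * inversePropensityWeight X S e ω + 1 := by
  unfold sarMultiplier inversePropensityWeight
  split_ifs <;> ring

lemma abs_sarMultiplier_le (he_m : 0 < e_m) (he : ∀ x, e_m ≤ e x) (he1 : ∀ x, e x ≤ 1) (ω : Ω) :
    |sarMultiplier X S e ω| ≤ 2 / e_m - 1 := by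
  have hle : 1 / e (X ω) ≤ 1 / e_m := one_div_le_one_div_of_le he_m (he _)
  have hone : 1 ≤ 1 / e (X ω) := one_le_one_div (he_m.trans_le (he _)) (he1 _)
  have htwo : 2 / e_m = 2 * (1 / e_m) := by ring
  unfold sarMultiplier inversePropensityWeight
  rw [htwo, abs_le]
  split_ifs
  · constructor <;> linarith
  · constructor <;> linarith [zero_div (e (X ω))]

lemma inv_sub_one_mem_Icc {p : ℝ} (he_m : 0 < e_m) (hp : e_m ≤ p) (hp1 : p ≤ 1) :
    p⁻¹ - 1 ∈ Set.Icc 0 (e_m⁻¹ - 1) :=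
  ⟨sub_nonneg.2 ((one_le_inv₀ (he_m.trans_le hp)).2 hp1),
    sub_le_sub_right (inv_anti₀ he_m hp) 1⟩

lemma abs_inv_sub_one_mul_le {p t : ℝ} (he_m : 0 < e_m) (hp : e_m ≤ p) (hp1 : p ≤ 1)
    (ht : |t| ≤ 1) : |4 * (p⁻¹ - 1) * t| ≤ 4 * (e_m⁻¹ - 1) := by
  obtain ⟨hinv, hinv_le⟩ := inv_sub_one_mem_Icc he_m hp hp1
  have := mul_le_mul hinv_le ht (abs_nonneg _) (hinv.trans hinv_le)
  rw [abs_mul, abs_of_nonneg (by linarith)]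
  linarith

lemma inv_sub_one_mul_sq_le {p y : ℝ} (he_m : 0 < e_m) (hp : e_m ≤ p) (hp1 : p ≤ 1)
    (hy : y = 0 ∨ y = 1) (t : ℝ) :
    4 * (p⁻¹ - 1) * t ^ 2 * y + t ^ 2 ≤ 2 * (2 / e_m - 1) * t ^ 2 := by
  obtain ⟨hinv, hinv_le⟩ := inv_sub_one_mem_Icc he_m hp hp1
  have hfactor : 4 * (p⁻¹ - 1) * y + 1 ≤ 2 * (2 / e_m - 1) := by
    rw [div_eq_mul_inv]
    rcases hy with rfl | rfl <;> linarith
  linarith [mul_le_mul_of_nonneg_right hfactor (sq_nonneg t)]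

lemma abs_sub_le_one (hg : ∀ x, g x = 0 ∨ g x = 1) (hg₀ : ∀ x, g₀ x = 0 ∨ g₀ x = 1) (x : α) :
    |g x - g₀ x| ≤ 1 := by
  rcases hg x with h | h <;> rcases hg₀ x with h' | h' <;> simp [h, h']

variable [MeasurableSpace Ω] [MeasurableSpace α] {P : Measure Ω}

lemma measurable_inversePropensityWeight (hX : Measurable X) (hS : Measurable S)
    (he : Measurable e) : Measurable (inversePropensityWeight X S e) :=
  (Measurable.ite (hS (measurableSet_singleton 1)) measurable_const measurable_const).div
    (he.comp hX)

lemma measurable_sarMultiplier (hX : Measurable X) (hS : Measurable S) (he : Measurable e) :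
    Measurable (sarMultiplier X S e) :=
  ((measurable_inversePropensityWeight hX hS he).const_mul 2).sub_const 1

lemma integrable_comp_mul (hX : Measurable X) (hq : Measurable q) (hc : ∀ x, |q x| ≤ c) {Z : Ω → ℝ}
    (hZ : Integrable Z P) : Integrable (fun ω => q (X ω) * Z ω) P :=
  hZ.bdd_mul (hq.comp hX).aestronglyMeasurable (ae_of_all _ fun ω => hc (X ω))

lemma risk_eq_integral (hX : Measurable X) (hY : Measurable Y)
    (hY01 : ∀ᵐ ω ∂P, Y ω = 0 ∨ Y ω = 1) (hg : IsClassifier g) :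
    risk P X Y g = ∫ ω, (g (X ω) + (1 - 2 * g (X ω)) * Y ω) ∂P := by
  have hmeas : MeasurableSet {ω | g (X ω) ≠ Y ω} :=
    (measurableSet_eq_fun (hg.1.comp hX) hY).compl
  rw [risk, ← measureReal_def, ← integral_indicator_one hmeas]
  refine integral_congr_ae (hY01.mono fun ω h => ?_)
  rcases h with h | h <;> rcases hg.2 (X ω) with hgω | hgω <;> norm_num [h, hgω]

variable [IsProbabilityMeasure P]

lemma integrable_of_zero_or_one {Z : Ω → ℝ} (hZ : Measurable Z)
    (hZ01 : ∀ᵐ ω ∂P, Z ω = 0 ∨ Z ω = 1) : Integrable Z P :=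
  .of_bound hZ.aestronglyMeasurable 1 <| hZ01.mono fun ω h => by
    rcases h with h | h <;> simp [h]

lemma integral_comp_mul_eq_zero_of_setIntegral_preimage_eq_zero (hX : Measurable X) {D : Ω → ℝ}
    (hD : Integrable D P) (hzero : ∀ A, MeasurableSet A → ∫ ω in X ⁻¹' A, D ω ∂P = 0)
    (hq : Measurable q) (hc : ∀ x, |q x| ≤ c) : ∫ ω, q (X ω) * D ω ∂P = 0 := by
  have hcondExp : (fun _ => (0 : ℝ)) =ᵐ[P] P[D | MeasurableSpace.comap X inferInstance] := by
    refine ae_eq_condExp_of_forall_setIntegral_eq hX.comap_le hD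
      (fun _ _ _ => integrableOn_zero) ?_ aestronglyMeasurable_const
    rintro _ ⟨A, hA, rfl⟩ _
    simp [hzero A hA]
  have hpull := condExp_stronglyMeasurable_mul_of_bound hX.comap_le (μ := P)
    (hq.comp (comap_measurable X)).stronglyMeasurable hD c (ae_of_all _ fun ω => hc (X ω))
  calc ∫ ω, q (X ω) * D ω ∂P
      = ∫ ω, (P[(q ∘ X) * D | MeasurableSpace.comap X inferInstance]) ω ∂P :=
        (integral_condExp hX.comap_le).symm
    _ = ∫ _, (0 : ℝ) ∂P := by
        refine integral_congr_ae ?_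
        filter_upwards [hpull, hcondExp] with ω hω hzeroω
        rw [hω, Pi.mul_apply, ← hzeroω, mul_zero]
    _ = 0 := integral_zero _ _

lemma integrable_propensity_mul_label (hX : Measurable X) (hY : Measurable Y)
    (hY01 : ∀ᵐ ω ∂P, Y ω = 0 ∨ Y ω = 1) (he : IsPropensity P X Y S e) :
    Integrable (fun ω => e (X ω) * Y ω) P :=
  integrable_comp_mul hX he.1 (c := 1)
    (fun x => abs_le.2 ⟨by linarith [(he.2.1 x).1], (he.2.1 x).2⟩)
    (integrable_of_zero_or_one hY hY01)

lemma integral_comp_mul_observed (hX : Measurable X) (hY : Measurable Y) (hS : Measurable S)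
    (hY01 : ∀ᵐ ω ∂P, Y ω = 0 ∨ Y ω = 1) (hS01 : ∀ᵐ ω ∂P, S ω = 0 ∨ S ω = 1)
    (he : IsPropensity P X Y S e) (hq : Measurable q) (hc : ∀ x, |q x| ≤ c) :
    ∫ ω, q (X ω) * S ω ∂P = ∫ ω, q (X ω) * (e (X ω) * Y ω) ∂P := by
  have hS_int := integrable_of_zero_or_one hS hS01
  have heY_int := integrable_propensity_mul_label hX hY hY01 he
  have hzero := integral_comp_mul_eq_zero_of_setIntegral_preimage_eq_zero hX (hS_int.sub heY_int)
    (fun A hA => by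
      simp only [Pi.sub_apply]
      rw [integral_sub hS_int.integrableOn heY_int.integrableOn, he.2.2.2 A hA, sub_self]) hq hc
  simp only [Pi.sub_apply, mul_sub] at hzero
  rwa [integral_sub (integrable_comp_mul hX hq hc hS_int) (integrable_comp_mul hX hq hc heY_int),
    sub_eq_zero] at hzero

lemma integrable_inversePropensityWeight (hX : Measurable X) (hS : Measurable S)
    (he : Measurable e) (he_m : 0 < e_m) (hee : ∀ x, e_m ≤ e x) :
    Integrable (inversePropensityWeight X S e) P := by
  refine .of_bound (measurable_inversePropensityWeight hX hS he).aestronglyMeasurable (1 / e_m)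
    (ae_of_all _ fun ω => ?_)
  have hpos : 0 < e (X ω) := he_m.trans_le (hee _)
  rw [inversePropensityWeight, norm_eq_abs, abs_div, abs_of_pos hpos]
  gcongr
  · split_ifs <;> simp
  · exact hee _

lemma integral_comp_mul_inversePropensityWeight (hX : Measurable X) (hY : Measurable Y)
    (hS : Measurable S) (hY01 : ∀ᵐ ω ∂P, Y ω = 0 ∨ Y ω = 1) (hS01 : ∀ᵐ ω ∂P, S ω = 0 ∨ S ω = 1)
    (he : IsPropensity P X Y S e) (he_m : 0 < e_m) (hee : ∀ x, e_m ≤ e x) (hq : Measurable q)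
    (hc : ∀ x, |q x| ≤ c) :
    ∫ ω, q (X ω) * inversePropensityWeight X S e ω ∂P = ∫ ω, q (X ω) * Y ω ∂P := by
  have hpos : ∀ x, 0 < e x := fun x => he_m.trans_le (hee x)
  have hbound : ∀ x, |q x / e x| ≤ c / e_m := fun x => by
    rw [abs_div, abs_of_pos (hpos x)]
    gcongr
    · exact (abs_nonneg _).trans (hc x)
    · exact hc x
    · exact hee x
  calc ∫ ω, q (X ω) * inversePropensityWeight X S e ω ∂P
      = ∫ ω, q (X ω) / e (X ω) * S ω ∂P := by
        refine integral_congr_ae (hS01.mono fun ω h => ?_)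
        rcases h with h | h <;> simp [inversePropensityWeight, h, div_eq_mul_inv]
    _ = ∫ ω, q (X ω) / e (X ω) * (e (X ω) * Y ω) ∂P :=
        integral_comp_mul_observed hX hY hS hY01 hS01 he (hq.div he.1) hbound
    _ = ∫ ω, q (X ω) * Y ω ∂P := by
        refine integral_congr_ae (ae_of_all _ fun ω => ?_)
        have := (hpos (X ω)).ne'
        field_simp

lemma integrable_comp_of_abs_le (hX : Measurable X) (hq : Measurable q) (hc : ∀ x, |q x| ≤ c) :
    Integrable (fun ω => q (X ω)) P :=
  .of_bound (hq.comp hX).aestronglyMeasurable c (ae_of_all _ fun ω => hc (X ω))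

lemma integral_comp_mul_inversePropensityWeight_add (hX : Measurable X) (hY : Measurable Y)
    (hS : Measurable S) (hY01 : ∀ᵐ ω ∂P, Y ω = 0 ∨ Y ω = 1) (hS01 : ∀ᵐ ω ∂P, S ω = 0 ∨ S ω = 1)
    (he : IsPropensity P X Y S e) (he_m : 0 < e_m) (hee : ∀ x, e_m ≤ e x) (hq : Measurable q)
    (hc : ∀ x, |q x| ≤ c) {R : Ω → ℝ} (hR : Integrable R P) :
    ∫ ω, (q (X ω) * inversePropensityWeight X S e ω + R ω) ∂P
      = ∫ ω, (q (X ω) * Y ω + R ω) ∂P := by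
  rw [integral_add (integrable_comp_mul hX hq hc
      (integrable_inversePropensityWeight hX hS he.1 he_m hee)) hR,
    integral_add (integrable_comp_mul hX hq hc (integrable_of_zero_or_one hY hY01)) hR,
    integral_comp_mul_inversePropensityWeight hX hY hS hY01 hS01 he he_m hee hq hc]

lemma integrable_zero_one_loss (hX : Measurable X) (hY : Measurable Y)
    (hY01 : ∀ᵐ ω ∂P, Y ω = 0 ∨ Y ω = 1) (hg : IsClassifier g) :
    Integrable (fun ω => g (X ω) + (1 - 2 * g (X ω)) * Y ω) P :=
  (integrable_of_zero_or_one (hg.1.comp hX) (ae_of_all _ fun ω => hg.2 (X ω))).add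
    (integrable_comp_mul hX (q := fun x => 1 - 2 * g x) (c := 1)
      (measurable_const.sub (hg.1.const_mul 2))
      (fun x => by rcases hg.2 x with h | h <;> norm_num [h]) (integrable_of_zero_or_one hY hY01))

lemma integral_sub_mul_sarMultiplier (hX : Measurable X) (hY : Measurable Y)
    (hS : Measurable S) (hY01 : ∀ᵐ ω ∂P, Y ω = 0 ∨ Y ω = 1) (hS01 : ∀ᵐ ω ∂P, S ω = 0 ∨ S ω = 1)
    (he : IsPropensity P X Y S e) (he_m : 0 < e_m) (hee : ∀ x, e_m ≤ e x) (hg : IsClassifier g)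
    (hg₀ : IsClassifier g₀) :
    ∫ ω, (g (X ω) - g₀ (X ω)) * sarMultiplier X S e ω ∂P = risk P X Y g₀ - risk P X Y g := by
  have hbound : ∀ x, |2 * (g x - g₀ x)| ≤ 2 := fun x => by
    rw [abs_mul, abs_two]
    linarith [abs_sub_le_one hg.2 hg₀.2 x]
  calc ∫ ω, (g (X ω) - g₀ (X ω)) * sarMultiplier X S e ω ∂P
      = ∫ ω, (2 * (g (X ω) - g₀ (X ω)) * inversePropensityWeight X S e ω
          + -(g (X ω) - g₀ (X ω))) ∂P := by
        refine integral_congr_ae (ae_of_all _ fun ω => ?_)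
        simp only [sarMultiplier]
        ring
    _ = ∫ ω, (2 * (g (X ω) - g₀ (X ω)) * Y ω + -(g (X ω) - g₀ (X ω))) ∂P :=
        integral_comp_mul_inversePropensityWeight_add hX hY hS hY01 hS01 he he_m hee
          ((hg.1.sub hg₀.1).const_mul 2) hbound
          (integrable_comp_of_abs_le hX (hg.1.sub hg₀.1) (abs_sub_le_one hg.2 hg₀.2)).neg
    _ = ∫ ω, ((g₀ (X ω) + (1 - 2 * g₀ (X ω)) * Y ω)
          - (g (X ω) + (1 - 2 * g (X ω)) * Y ω)) ∂P := by
        refine integral_congr_ae (ae_of_all _ fun ω => ?_)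
        ring
    _ = risk P X Y g₀ - risk P X Y g := by
        rw [integral_sub (integrable_zero_one_loss hX hY hY01 hg₀)
          (integrable_zero_one_loss hX hY hY01 hg), risk_eq_integral hX hY hY01 hg₀,
          risk_eq_integral hX hY hY01 hg]

lemma integral_sub_mul_sarMultiplier_sq_le (hX : Measurable X) (hY : Measurable Y)
    (hS : Measurable S) (hY01 : ∀ᵐ ω ∂P, Y ω = 0 ∨ Y ω = 1) (hS01 : ∀ᵐ ω ∂P, S ω = 0 ∨ S ω = 1)
    (he : IsPropensity P X Y S e) (he_m : 0 < e_m) (hee : ∀ x, e_m ≤ e x) (hg : IsClassifier g)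
    (hg₀ : IsClassifier g₀) :
    ∫ ω, ((g (X ω) - g₀ (X ω)) * sarMultiplier X S e ω) ^ 2 ∂P
      ≤ 2 * (2 / e_m - 1) * ∫ ω, |g (X ω) - g₀ (X ω)| ^ 2 ∂P := by
  have hsq : ∀ x, |(g x - g₀ x) ^ 2| ≤ 1 := fun x => by
    rw [abs_pow]
    exact pow_le_one₀ (abs_nonneg _) (abs_sub_le_one hg.2 hg₀.2 x)
  have hq : ∀ x, |4 * ((e x)⁻¹ - 1) * (g x - g₀ x) ^ 2| ≤ 4 * (e_m⁻¹ - 1) := fun x =>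
    abs_inv_sub_one_mul_le he_m (hee x) (he.2.1 x).2 (hsq x)
  have hsq_meas := (hg.1.sub hg₀.1).pow_const 2
  have hsq_int : Integrable (fun ω => (g (X ω) - g₀ (X ω)) ^ 2) P :=
    integrable_comp_of_abs_le hX hsq_meas hsq
  have hq_meas : Measurable fun x => 4 * ((e x)⁻¹ - 1) * (g x - g₀ x) ^ 2 :=
    ((he.1.inv.sub_const 1).const_mul 4).mul hsq_meas
  calc ∫ ω, ((g (X ω) - g₀ (X ω)) * sarMultiplier X S e ω) ^ 2 ∂P
      = ∫ ω, (4 * ((e (X ω))⁻¹ - 1) * (g (X ω) - g₀ (X ω)) ^ 2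
          * inversePropensityWeight X S e ω + (g (X ω) - g₀ (X ω)) ^ 2) ∂P := by
        refine integral_congr_ae (ae_of_all _ fun ω => ?_)
        simp only [mul_pow, sarMultiplier_sq_eq]
        ring
    _ = ∫ ω, (4 * ((e (X ω))⁻¹ - 1) * (g (X ω) - g₀ (X ω)) ^ 2 * Y ω
          + (g (X ω) - g₀ (X ω)) ^ 2) ∂P :=
        integral_comp_mul_inversePropensityWeight_add hX hY hS hY01 hS01 he he_m hee hq_meas hq
          hsq_int
    _ ≤ ∫ ω, 2 * (2 / e_m - 1) * (g (X ω) - g₀ (X ω)) ^ 2 ∂P :=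
        integral_mono_ae ((integrable_comp_mul hX hq_meas hq
          (integrable_of_zero_or_one hY hY01)).add hsq_int) (hsq_int.const_mul _)
          (hY01.mono fun ω h => inv_sub_one_mul_sq_le he_m (hee _) (he.2.1 _).2 h _)
    _ = 2 * (2 / e_m - 1) * ∫ ω, |g (X ω) - g₀ (X ω)| ^ 2 ∂P := by
        simp only [sq_abs, integral_const_mul]

end InversePropensityWeighting

section CenteredEmpiricalRisk

variable {Ω α : Type*} {V n : ℕ}

lemma not_shatters_range_comp {ι : Type*} {g : ι → α → ℝ}
    (hV : ∀ x : Fin (V + 1) → α, ¬ Shatters (Set.range g) x) (X : Ω → α) (ω : Fin (V + 1) → Ω) :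
    ¬ Shatters (Set.range fun i => g i ∘ X) ω := fun hω => hV (X ∘ ω) fun b => by
  obtain ⟨_, ⟨i, rfl⟩, hi⟩ := hω b
  exact ⟨g i, ⟨i, rfl⟩, hi⟩

variable [MeasurableSpace Ω] [MeasurableSpace α] {P : Measure Ω} [IsProbabilityMeasure P]
  {X : Ω → α} {Y S : Ω → ℝ} {e g₀ : α → ℝ} {e_m σ : ℝ}

lemma two_div_sub_one_pos (he : IsPropensity P X Y S e) (he_m : 0 < e_m) (hee : ∀ x, e_m ≤ e x) :
    0 < 2 / e_m - 1 := by
  obtain ⟨ω⟩ : Nonempty Ω := nonempty_of_isProbabilityMeasure P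
  have : e_m ≤ 1 := (hee (X ω)).trans (he.2.1 _).2
  rw [sub_pos, lt_div_iff₀ he_m]
  linarith

lemma empRisk_sub_risk_sub_eq {g : α → ℝ} (hX : Measurable X) (hY : Measurable Y)
    (hS : Measurable S) (hY01 : ∀ᵐ ω ∂P, Y ω = 0 ∨ Y ω = 1) (hS01 : ∀ᵐ ω ∂P, S ω = 0 ∨ S ω = 1)
    (he : IsPropensity P X Y S e) (he_m : 0 < e_m) (hee : ∀ x, e_m ≤ e x) (hg : IsClassifier g)
    (hg₀ : IsClassifier g₀) (hn : 0 < n) (ω : Fin n → Ω) :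
    (empRisk (rSAR e) X S n g₀ ω - risk P X Y g₀) - (empRisk (rSAR e) X S n g ω - risk P X Y g)
      = 1 / n * ∑ k, ((g (X (ω k)) - g₀ (X (ω k))) * sarMultiplier X S e (ω k)
          - ∫ ω', (g (X ω') - g₀ (X ω')) * sarMultiplier X S e ω' ∂P) := by
  have hn' : (n : ℝ) ≠ 0 := Nat.cast_ne_zero.2 hn.ne'
  rw [integral_sub_mul_sarMultiplier hX hY hS hY01 hS01 he he_m hee hg hg₀]
  simp only [← rSAR_sub_rSAR hg.2 hg₀.2, Finset.sum_sub_distrib, empRisk, Finset.sum_const,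
    Finset.card_univ, Fintype.card_fin, nsmul_eq_mul]
  field_simp
  ring

lemma sqrt_mul_integral_iSup_empRisk_sub_risk_sub_le {ι : Type*} [Countable ι] [Nonempty ι]
    {g : ι → α → ℝ} (hX : Measurable X) (hY : Measurable Y) (hS : Measurable S)
    (hY01 : ∀ᵐ ω ∂P, Y ω = 0 ∨ Y ω = 1) (hS01 : ∀ᵐ ω ∂P, S ω = 0 ∨ S ω = 1)
    (he : IsPropensity P X Y S e) (he_m : 0 < e_m) (hee : ∀ x, e_m ≤ e x)
    (hg : ∀ i, IsClassifier (g i)) (hg₀ : IsClassifier g₀)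
    (hV : ∀ x : Fin (V + 1) → α, ¬ Shatters (Set.range g) x) (hV0 : 0 < V) (hn : 0 < n)
    (hσ : 0 < σ)
    (hdist : ∀ i, √(2 * (2 / e_m - 1)) * √(∫ ω, |g i (X ω) - g₀ (X ω)| ^ 2 ∂P) ≤ σ)
    (hlarge : 168 * σ * √(V * (1 + log (max ((2 / e_m - 1) / σ) 1)))
      ≤ √n * σ ^ 2 / (2 / e_m - 1)) :
    √n * ∫ ω, (⨆ i, ((empRisk (rSAR e) X S n g₀ ω - risk P X Y g₀)
        - (empRisk (rSAR e) X S n (g i) ω - risk P X Y (g i)))) ∂(Measure.pi fun _ : Fin n => P)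
      ≤ 168 * σ * √(V * (1 + log (max ((2 / e_m - 1) / σ) 1))) := by
  have : Nonempty (Fin n) := ⟨⟨0, hn⟩⟩
  have hC : 0 < 2 / e_m - 1 := two_div_sub_one_pos he he_m hee
  have hn' : (0 : ℝ) < n := Nat.cast_pos.2 hn
  have hvar : ∀ i, ∫ ω, ((g i (X ω) - g₀ (X ω)) * sarMultiplier X S e ω) ^ 2 ∂P
      ≤ σ ^ 2 := fun i => by
    refine (integral_sub_mul_sarMultiplier_sq_le hX hY hS hY01 hS01 he he_m hee (hg i) hg₀).trans ?_
    rw [← sqrt_le_left hσ.le, sqrt_mul (by positivity)]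
    exact hdist i
  have hlarge' : 168 * (2 / e_m - 1) * √(V * (1 + log (max ((2 / e_m - 1) / σ) 1)))
      ≤ √(Fintype.card (Fin n)) * σ := by
    rw [Fintype.card_fin]
    rw [le_div_iff₀ hC] at hlarge
    refine le_of_mul_le_mul_left ?_ hσ
    linarith
  have hbound := integral_iSup_sub_mul_le_of_variance_le (κ := Fin n) (P := P)
    (g := fun i => g i ∘ X) (fun i => (hg i).1.comp hX) (fun i ω => (hg i).2 (X ω))
    (hg₀.1.comp hX) (fun ω => hg₀.2 (X ω)) (not_shatters_range_comp hV X) hV0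
    (measurable_sarMultiplier hX hS he.1) hC
    (abs_sarMultiplier_le he_m hee fun x => (he.2.1 x).2) hσ hvar hlarge'
  simp only [empRisk_sub_risk_sub_eq hX hY hS hY01 hS01 he he_m hee (hg _) hg₀ hn,
    ← mul_iSup_of_nonneg (one_div_nonneg.2 hn'.le), integral_const_mul]
  rw [Fintype.card_fin] at hbound
  calc _ ≤ √n * (1 / n * (168 * σ * (√n * √(V * (1 + log (max ((2 / e_m - 1) / σ) 1)))))) := by
        gcongr
        exact hbound
    _ = √n * √n / n * (168 * σ * √(V * (1 + log (max ((2 / e_m - 1) / σ) 1)))) := by ring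
    _ = _ := by rw [mul_self_sqrt hn'.le, div_self hn'.ne', one_mul]

theorem expected_sup_centered_empirical_process_le_general {𝒢 : Set (α → ℝ)}
    (hX : Measurable X) (hY : Measurable Y) (hS : Measurable S)
    (hY01 : ∀ᵐ ω ∂P, Y ω = 0 ∨ Y ω = 1) (hS01 : ∀ᵐ ω ∂P, S ω = 0 ∨ S ω = 1)
    (he : IsPropensity P X Y S e) (he_m : 0 < e_m) (hee : ∀ x, e_m ≤ e x)
    (h𝒢 : 𝒢.Countable) (hclassifier : ∀ g ∈ 𝒢, IsClassifier g)
    (hV : ∀ x : Fin (V + 1) → α, ¬ Shatters 𝒢 x) (hV0 : 0 < V) (hn : 0 < n) (hg₀ : g₀ ∈ 𝒢)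
    (hσ : 0 < σ)
    (hlarge : 168 * σ * √(V * (1 + log (max ((2 / e_m - 1) / σ) 1)))
      ≤ √n * σ ^ 2 / (2 / e_m - 1)) :
    √n * ∫ ω, (⨆ g : {g : α → ℝ // g ∈ 𝒢 ∧
          √(2 * (2 / e_m - 1)) * √(∫ ω', |g (X ω') - g₀ (X ω')| ^ 2 ∂P) ≤ σ},
        ((empRisk (rSAR e) X S n g₀ ω - risk P X Y g₀)
          - (empRisk (rSAR e) X S n g.1 ω - risk P X Y g.1))) ∂(Measure.pi fun _ : Fin n => P)
      ≤ 168 * σ * √(V * (1 + log (max ((2 / e_m - 1) / σ) 1))) := by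
  have hcountable : Countable {g : α → ℝ // g ∈ 𝒢 ∧
      √(2 * (2 / e_m - 1)) * √(∫ ω', |g (X ω') - g₀ (X ω')| ^ 2 ∂P) ≤ σ} :=
    (h𝒢.mono fun _ hg => hg.1).to_subtype
  have hnonempty : Nonempty {g : α → ℝ // g ∈ 𝒢 ∧
      √(2 * (2 / e_m - 1)) * √(∫ ω', |g (X ω') - g₀ (X ω')| ^ 2 ∂P) ≤ σ} :=
    ⟨⟨g₀, hg₀, by simpa using hσ.le⟩⟩
  refine sqrt_mul_integral_iSup_empRisk_sub_risk_sub_le hX hY hS hY01 hS01 he he_m hee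
    (fun g => hclassifier _ g.2.1) (hclassifier _ hg₀) (fun x hx => hV x fun b => ?_) hV0 hn hσ
    (fun g => g.2.2) hlarge
  obtain ⟨_, ⟨g, rfl⟩, hgb⟩ := hx b
  exact ⟨g.1, g.2.1, hgb⟩

end CenteredEmpiricalRisk

/-- **Proposition 3.** If `𝒮` has finite VC dimension `V`, `𝒮'` is a countable dense
subclass (separability assumption), the propensity satisfies `e(x) ≥ e_m > 0`, and
`C_e = 2/e_m − 1`, `d(g,g') = √(2 C_e)·√(E[|g(X) − g'(X)|²])`, then there is an absolute
constant `K ≥ 1` such that `Φ(σ) = K·σ·√(V·(1 + log(max(C_e/σ, 1))))` satisfies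
`√n·E[sup_{g ∈ 𝒮', d(g,g₀) ≤ σ} (R̄ₙ(g₀) − R̄ₙ(g))] ≤ Φ(σ)` for all `g₀ ∈ 𝒮'` and every
`σ > 0` with `Φ(σ) ≤ √n·σ²/C_e`. -/
theorem expected_sup_centered_empirical_process_le :
    ∃ K : ℝ, 1 ≤ K ∧
      ∀ (dim : ℕ) (Ω : Type) (_ : MeasurableSpace Ω) (P : Measure Ω)
        (_ : IsProbabilityMeasure P)
        (X : Ω → (Fin dim → ℝ)) (Y S : Ω → ℝ) (η e : (Fin dim → ℝ) → ℝ)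
        (𝒮 𝒮' : Set ((Fin dim → ℝ) → ℝ)) (V n : ℕ) (e_m : ℝ),
        Measurable X → Measurable Y → Measurable S →
        (∀ᵐ ω ∂P, Y ω = 0 ∨ Y ω = 1) → (∀ᵐ ω ∂P, S ω = 0 ∨ S ω = 1) →
        IsRegression P X Y η → IsPropensity P X Y S e →
        (∀ g ∈ 𝒮, IsClassifier g) →
        HasVCDim 𝒮 V → 0 < V → 0 < n →
        SeparableClass (rSAR e) 𝒮 𝒮' →
        0 < e_m → (∀ x, e_m ≤ e x) →
        ∀ g₀ ∈ 𝒮', ∀ σ : ℝ, 0 < σ →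
          K * σ * Real.sqrt ((V : ℝ) * (1 + Real.log (max ((2 / e_m - 1) / σ) 1))) ≤
            Real.sqrt (n : ℝ) * σ ^ 2 / (2 / e_m - 1) →
          Real.sqrt (n : ℝ) *
            ∫ ω, (⨆ g : {g : (Fin dim → ℝ) → ℝ // g ∈ 𝒮' ∧
                Real.sqrt (2 * (2 / e_m - 1)) *
                  Real.sqrt (∫ ω', |g (X ω') - g₀ (X ω')| ^ 2 ∂P) ≤ σ},
              ((empRisk (rSAR e) X S n g₀ ω - risk P X Y g₀) -
                (empRisk (rSAR e) X S n g.1 ω - risk P X Y g.1)))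
            ∂(Measure.pi fun _ : Fin n => P) ≤
          K * σ * Real.sqrt ((V : ℝ) * (1 + Real.log (max ((2 / e_m - 1) / σ) 1))) := by
  refine ⟨168, by norm_num, ?_⟩
  intro _ _ _ _ _ _ _ _ _ _ _ _ _ _ _ hX hY hS hY01 hS01 _ he hclassifier hVC hV0 hn hsep he_m hee
    g₀ hg₀ σ hσ hlarge
  refine expected_sup_centered_empirical_process_le_general hX hY hS hY01 hS01 he he_m hee hsep.2.1
    (fun g hg => hclassifier g (hsep.1 hg)) (fun x hx => hVC.2 x fun b => ?_) hV0 hn hg₀ hσ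
    hlarge
  obtain ⟨g, hg, hgb⟩ := hx b
  exact ⟨g, hsep.1 hg, hgb⟩
end
end

section
/- Assume the propensity satisfies e(x) > 0 for all x ∈ ℝ^d. Then for every classifier g, the SAR loss is unbiased: E[r_SAR(g,(X,S))] = P(g(X) ≠ Y); consequently, for an i.i.d. sample (X_1,S_1),…,(X_n,S_n), E[R̂_n^SAR(g)] = P(g(X) ≠ Y). -/
/-! Inverse propensity weighting: the propensity identity says that the measures `S dP` and
`e(X) Y dP` have the same image under `X`. Integrating `φ / e` against this common image gives
`E[S / e(X) · φ(X)] = E[Y φ(X)]` for every measurable `φ`, and integrability transfers along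
the same identity even when `1 / e` is unbounded. For a `{0, 1}`-valued `g`, the SAR loss is
`s / e(x) · (1 - 2 g(x)) + g(x)` and the misclassification indicator is
`y (1 - 2 g(x)) + g(x)`, so `φ = 1 - 2 g` matches the two expectations. -/

open MeasureTheory ProbabilityTheory Real Filter Topology

noncomputable section

section ChangeOfWeight

variable {Ω α E : Type*} [MeasurableSpace Ω] [MeasurableSpace α] [NormedAddCommGroup E]
  [NormedSpace ℝ E] {μ : Measure Ω} {X : Ω → α} {u v : Ω → ℝ} {f : α → E}

lemma map_withDensity_ofReal_eq_of_setIntegral_preimage_eq (hX : Measurable X)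
    (hu : Integrable u μ) (hv : Integrable v μ) (hu₀ : 0 ≤ᵐ[μ] u) (hv₀ : 0 ≤ᵐ[μ] v)
    (h : ∀ A, MeasurableSet A → ∫ ω in X ⁻¹' A, u ω ∂μ = ∫ ω in X ⁻¹' A, v ω ∂μ) :
    (μ.withDensity fun ω => ENNReal.ofReal (u ω)).map X =
      (μ.withDensity fun ω => ENNReal.ofReal (v ω)).map X := by
  ext A hA
  rw [Measure.map_apply hX hA, Measure.map_apply hX hA,
    withDensity_apply _ (hX hA), withDensity_apply _ (hX hA),
    ← ofReal_integral_eq_lintegral_ofReal hu.restrict (ae_restrict_of_ae hu₀),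
    ← ofReal_integral_eq_lintegral_ofReal hv.restrict (ae_restrict_of_ae hv₀), h A hA]

lemma integrable_map_withDensity_ofReal_iff (hX : Measurable X) (hu : AEMeasurable u μ)
    (hu₀ : 0 ≤ᵐ[μ] u) (hf : StronglyMeasurable f) :
    Integrable f ((μ.withDensity fun ω => ENNReal.ofReal (u ω)).map X) ↔
      Integrable (fun ω => u ω • f (X ω)) μ := by
  rw [integrable_map_measure hf.aestronglyMeasurable hX.aemeasurable,
    integrable_withDensity_iff_integrable_smul₀' hu.ennreal_ofReal
      (.of_forall fun _ => ENNReal.ofReal_lt_top)]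
  refine integrable_congr ?_
  filter_upwards [hu₀] with ω hω
  rw [ENNReal.toReal_ofReal hω, Function.comp_apply]

lemma integral_map_withDensity_ofReal (hX : Measurable X) (hu : AEMeasurable u μ)
    (hu₀ : 0 ≤ᵐ[μ] u) (hf : StronglyMeasurable f) :
    ∫ x, f x ∂(μ.withDensity fun ω => ENNReal.ofReal (u ω)).map X =
      ∫ ω, u ω • f (X ω) ∂μ := by
  rw [integral_map hX.aemeasurable hf.aestronglyMeasurable,
    integral_withDensity_eq_integral_toReal_smul₀ hu.ennreal_ofReal
      (.of_forall fun _ => ENNReal.ofReal_lt_top)]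
  refine integral_congr_ae ?_
  filter_upwards [hu₀] with ω hω
  rw [ENNReal.toReal_ofReal hω]

lemma integrable_smul_comp_iff_of_setIntegral_preimage_eq (hX : Measurable X)
    (hu : Integrable u μ) (hv : Integrable v μ) (hu₀ : 0 ≤ᵐ[μ] u) (hv₀ : 0 ≤ᵐ[μ] v)
    (h : ∀ A, MeasurableSet A → ∫ ω in X ⁻¹' A, u ω ∂μ = ∫ ω in X ⁻¹' A, v ω ∂μ)
    (hf : StronglyMeasurable f) :
    Integrable (fun ω => u ω • f (X ω)) μ ↔ Integrable (fun ω => v ω • f (X ω)) μ := by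
  rw [← integrable_map_withDensity_ofReal_iff hX hu.aemeasurable hu₀ hf,
    ← integrable_map_withDensity_ofReal_iff hX hv.aemeasurable hv₀ hf,
    map_withDensity_ofReal_eq_of_setIntegral_preimage_eq hX hu hv hu₀ hv₀ h]

lemma integral_smul_comp_eq_of_setIntegral_preimage_eq (hX : Measurable X)
    (hu : Integrable u μ) (hv : Integrable v μ) (hu₀ : 0 ≤ᵐ[μ] u) (hv₀ : 0 ≤ᵐ[μ] v)
    (h : ∀ A, MeasurableSet A → ∫ ω in X ⁻¹' A, u ω ∂μ = ∫ ω in X ⁻¹' A, v ω ∂μ)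
    (hf : StronglyMeasurable f) :
    ∫ ω, u ω • f (X ω) ∂μ = ∫ ω, v ω • f (X ω) ∂μ := by
  rw [← integral_map_withDensity_ofReal hX hu.aemeasurable hu₀ hf,
    ← integral_map_withDensity_ofReal hX hv.aemeasurable hv₀ hf,
    map_withDensity_ofReal_eq_of_setIntegral_preimage_eq hX hu hv hu₀ hv₀ h]

end ChangeOfWeight

lemma mul_smul_inv_smul₀ {G₀ β : Type*} [CommGroupWithZero G₀] [MulAction G₀ β] {a : G₀}
    (ha : a ≠ 0) (b : G₀) (x : β) : (a * b) • a⁻¹ • x = b • x := by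
  rw [smul_smul, mul_right_comm, mul_inv_cancel₀ ha, one_mul]

namespace IsPropensity

variable {Ω α E : Type*} [MeasurableSpace Ω] [MeasurableSpace α] [NormedAddCommGroup E]
  [NormedSpace ℝ E] {P : Measure Ω} {X : Ω → α} {Y S : Ω → ℝ} {e : α → ℝ} {φ : α → E}

lemma integrable_comp_mul (hprop : IsPropensity P X Y S e) (hX : Measurable X)
    (hY : Integrable Y P) : Integrable (fun ω => e (X ω) * Y ω) P := by
  refine hY.bdd_mul (c := 1) (hprop.1.comp hX).aestronglyMeasurable (.of_forall fun ω => ?_)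
  obtain ⟨he₀, he₁⟩ := hprop.2.1 (X ω)
  rwa [Real.norm_of_nonneg he₀]

lemma comp_mul_ae_nonneg (hprop : IsPropensity P X Y S e) (hY₀ : 0 ≤ᵐ[P] Y) :
    0 ≤ᵐ[P] fun ω => e (X ω) * Y ω :=
  hY₀.mono fun ω hω => mul_nonneg (hprop.2.1 (X ω)).1 hω

lemma integrable_div_smul_comp_iff (hprop : IsPropensity P X Y S e) (hX : Measurable X)
    (hY : Integrable Y P) (hS : Integrable S P) (hY₀ : 0 ≤ᵐ[P] Y) (hS₀ : 0 ≤ᵐ[P] S)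
    (he : ∀ᵐ ω ∂P, e (X ω) ≠ 0) (hφ : StronglyMeasurable φ) :
    Integrable (fun ω => (S ω / e (X ω)) • φ (X ω)) P ↔
      Integrable (fun ω => Y ω • φ (X ω)) P := by
  simp_rw [div_eq_mul_inv, mul_smul]
  exact (integrable_smul_comp_iff_of_setIntegral_preimage_eq hX hS
    (hprop.integrable_comp_mul hX hY) hS₀ (hprop.comp_mul_ae_nonneg hY₀) hprop.2.2.2
    (hprop.1.inv.stronglyMeasurable.smul hφ)).trans
    (integrable_congr (he.mono fun ω hω => mul_smul_inv_smul₀ hω (Y ω) (φ (X ω))))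

lemma integral_div_smul_comp (hprop : IsPropensity P X Y S e) (hX : Measurable X)
    (hY : Integrable Y P) (hS : Integrable S P) (hY₀ : 0 ≤ᵐ[P] Y) (hS₀ : 0 ≤ᵐ[P] S)
    (he : ∀ᵐ ω ∂P, e (X ω) ≠ 0) (hφ : StronglyMeasurable φ) :
    ∫ ω, (S ω / e (X ω)) • φ (X ω) ∂P = ∫ ω, Y ω • φ (X ω) ∂P := by
  simp_rw [div_eq_mul_inv, mul_smul]
  exact (integral_smul_comp_eq_of_setIntegral_preimage_eq hX hS
    (hprop.integrable_comp_mul hX hY) hS₀ (hprop.comp_mul_ae_nonneg hY₀) hprop.2.2.2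
    (hprop.1.inv.stronglyMeasurable.smul hφ)).trans
    (integral_congr_ae (he.mono fun ω hω => mul_smul_inv_smul₀ hω (Y ω) (φ (X ω))))

end IsPropensity

section ZeroOneValued

variable {Ω : Type*} [MeasurableSpace Ω] {μ : Measure Ω} {f : Ω → ℝ}

lemma ae_nonneg_of_ae_eq_zero_or_one (h : ∀ᵐ ω ∂μ, f ω = 0 ∨ f ω = 1) : 0 ≤ᵐ[μ] f := by
  filter_upwards [h] with ω hω
  rcases hω with hω | hω <;> simp [hω]

lemma integrable_of_ae_eq_zero_or_one [IsFiniteMeasure μ] (hf : AEStronglyMeasurable f μ)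
    (h : ∀ᵐ ω ∂μ, f ω = 0 ∨ f ω = 1) : Integrable f μ := by
  refine .of_bound hf 1 ?_
  filter_upwards [h] with ω hω
  rcases hω with hω | hω <;> simp [hω]

end ZeroOneValued

namespace IsClassifier

variable {Ω α : Type*} [MeasurableSpace Ω] [MeasurableSpace α] {P : Measure Ω} {X : Ω → α}
  {Y : Ω → ℝ} {e g : α → ℝ}

lemma rSAR_eq (hg : IsClassifier g) (x : α) {s : ℝ} (hs : s = 0 ∨ s = 1) :
    rSAR e g (x, s) = s / e x * (1 - 2 * g x) + g x := by
  rcases hs with hs | hs <;> rcases hg.2 x with hx | hx <;> norm_num [rSAR, hs, hx]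

lemma risk_eq_integral (hg : IsClassifier g) (hX : Measurable X) (hY : Measurable Y)
    (hYb : ∀ᵐ ω ∂P, Y ω = 0 ∨ Y ω = 1) :
    risk P X Y g = ∫ ω, (Y ω * (1 - 2 * g (X ω)) + g (X ω)) ∂P := by
  have hmeas : MeasurableSet {ω | g (X ω) ≠ Y ω} :=
    (measurableSet_eq_fun (hg.1.comp hX) hY).compl
  rw [risk, ← measureReal_def, ← integral_indicator_one hmeas]
  refine integral_congr_ae ?_
  filter_upwards [hYb] with ω hω
  rcases hω with hω | hω <;> rcases hg.2 (X ω) with hx | hx <;>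
    norm_num [Set.indicator_apply, hω, hx]

lemma integrable_comp [IsFiniteMeasure P] (hg : IsClassifier g) (hX : Measurable X) :
    Integrable (fun ω => g (X ω)) P :=
  integrable_of_ae_eq_zero_or_one (hg.1.comp hX).aestronglyMeasurable
    (.of_forall fun ω => hg.2 (X ω))

lemma stronglyMeasurable_one_sub_two_mul (hg : IsClassifier g) :
    StronglyMeasurable fun x => 1 - 2 * g x :=
  (measurable_const.sub (hg.1.const_mul 2)).stronglyMeasurable

lemma integrable_mul_one_sub_two_mul_comp (hg : IsClassifier g) (hX : Measurable X)
    (hY : Integrable Y P) : Integrable (fun ω => Y ω * (1 - 2 * g (X ω))) P := by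
  refine hY.mul_bdd (c := 1)
    (hg.stronglyMeasurable_one_sub_two_mul.comp_measurable hX).aestronglyMeasurable
    (.of_forall fun ω => ?_)
  rcases hg.2 (X ω) with hx | hx <;> norm_num [hx]

end IsClassifier

namespace IsPropensity

variable {Ω α : Type*} [MeasurableSpace Ω] [MeasurableSpace α] {P : Measure Ω}
  [IsFiniteMeasure P] {X : Ω → α} {Y S : Ω → ℝ} {e g : α → ℝ}

lemma integrable_div_mul_one_sub_two_mul_comp (hprop : IsPropensity P X Y S e)
    (hX : Measurable X) (hY : Measurable Y) (hS : Measurable S)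
    (hYb : ∀ᵐ ω ∂P, Y ω = 0 ∨ Y ω = 1) (hSb : ∀ᵐ ω ∂P, S ω = 0 ∨ S ω = 1)
    (he : ∀ᵐ ω ∂P, e (X ω) ≠ 0) (hg : IsClassifier g) :
    Integrable (fun ω => S ω / e (X ω) * (1 - 2 * g (X ω))) P :=
  have hYi := integrable_of_ae_eq_zero_or_one hY.aestronglyMeasurable hYb
  have hSi := integrable_of_ae_eq_zero_or_one hS.aestronglyMeasurable hSb
  (hprop.integrable_div_smul_comp_iff hX hYi hSi (ae_nonneg_of_ae_eq_zero_or_one hYb)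
    (ae_nonneg_of_ae_eq_zero_or_one hSb) he hg.stronglyMeasurable_one_sub_two_mul).2
    (hg.integrable_mul_one_sub_two_mul_comp hX hYi)

lemma integrable_rSAR (hprop : IsPropensity P X Y S e) (hX : Measurable X)
    (hY : Measurable Y) (hS : Measurable S) (hYb : ∀ᵐ ω ∂P, Y ω = 0 ∨ Y ω = 1)
    (hSb : ∀ᵐ ω ∂P, S ω = 0 ∨ S ω = 1) (he : ∀ᵐ ω ∂P, e (X ω) ≠ 0) (hg : IsClassifier g) :
    Integrable (fun ω => rSAR e g (X ω, S ω)) P :=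
  ((hprop.integrable_div_mul_one_sub_two_mul_comp hX hY hS hYb hSb he hg).add
    (hg.integrable_comp hX)).congr (hSb.mono fun ω hω => (hg.rSAR_eq (X ω) hω).symm)

lemma integral_rSAR (hprop : IsPropensity P X Y S e) (hX : Measurable X)
    (hY : Measurable Y) (hS : Measurable S) (hYb : ∀ᵐ ω ∂P, Y ω = 0 ∨ Y ω = 1)
    (hSb : ∀ᵐ ω ∂P, S ω = 0 ∨ S ω = 1) (he : ∀ᵐ ω ∂P, e (X ω) ≠ 0) (hg : IsClassifier g) :
    ∫ ω, rSAR e g (X ω, S ω) ∂P = risk P X Y g := by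
  have hYi := integrable_of_ae_eq_zero_or_one hY.aestronglyMeasurable hYb
  have hSi := integrable_of_ae_eq_zero_or_one hS.aestronglyMeasurable hSb
  have hgX : Integrable (fun ω => g (X ω)) P := hg.integrable_comp hX
  calc ∫ ω, rSAR e g (X ω, S ω) ∂P
      = ∫ ω, (S ω / e (X ω) * (1 - 2 * g (X ω)) + g (X ω)) ∂P :=
        integral_congr_ae (hSb.mono fun ω hω => hg.rSAR_eq (X ω) hω)
    _ = ∫ ω, S ω / e (X ω) * (1 - 2 * g (X ω)) ∂P + ∫ ω, g (X ω) ∂P :=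
        integral_add
          (hprop.integrable_div_mul_one_sub_two_mul_comp hX hY hS hYb hSb he hg) hgX
    _ = ∫ ω, Y ω * (1 - 2 * g (X ω)) ∂P + ∫ ω, g (X ω) ∂P :=
        congrArg (· + _) (hprop.integral_div_smul_comp hX hYi hSi
          (ae_nonneg_of_ae_eq_zero_or_one hYb) (ae_nonneg_of_ae_eq_zero_or_one hSb) he
          hg.stronglyMeasurable_one_sub_two_mul)
    _ = ∫ ω, (Y ω * (1 - 2 * g (X ω)) + g (X ω)) ∂P :=
        (integral_add (hg.integrable_mul_one_sub_two_mul_comp hX hYi) hgX).symm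
    _ = risk P X Y g := (hg.risk_eq_integral hX hY hYb).symm

end IsPropensity

lemma integral_empRisk {Ω α : Type*} [MeasurableSpace Ω] {P : Measure Ω}
    [IsProbabilityMeasure P] {r : (α → ℝ) → α × ℝ → ℝ} {X : Ω → α} {S : Ω → ℝ} {g : α → ℝ}
    {n : ℕ} (hr : Integrable (fun ω => r g (X ω, S ω)) P) (hn : n ≠ 0) :
    ∫ ω, empRisk r X S n g ω ∂(Measure.pi fun _ : Fin n => P) =
      ∫ ω, r g (X ω, S ω) ∂P := by
  have hcoord (i : Fin n) :
      ∫ ω : Fin n → Ω, r g (X (ω i), S (ω i)) ∂(Measure.pi fun _ => P) =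
        ∫ ω, r g (X ω, S ω) ∂P :=
    integral_comp_eval (μ := fun _ : Fin n => P) hr.aestronglyMeasurable
  simp only [empRisk]
  rw [integral_const_mul, integral_finsetSum _ fun i _ =>
    integrable_comp_eval (μ := fun _ : Fin n => P) (i := i) hr]
  simp only [hcoord, Finset.sum_const, Finset.card_univ, Fintype.card_fin, nsmul_eq_mul]
  field_simp

theorem rSAR_unbiased_general {Ω α : Type*} [MeasurableSpace Ω] [MeasurableSpace α]
    {P : Measure Ω} [IsProbabilityMeasure P] {X : Ω → α} {Y S : Ω → ℝ} {e g : α → ℝ} {n : ℕ}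
    (hX : Measurable X) (hY : Measurable Y) (hS : Measurable S)
    (hYb : ∀ᵐ ω ∂P, Y ω = 0 ∨ Y ω = 1) (hSb : ∀ᵐ ω ∂P, S ω = 0 ∨ S ω = 1)
    (hprop : IsPropensity P X Y S e) (he : ∀ᵐ ω ∂P, e (X ω) ≠ 0) (hg : IsClassifier g)
    (hn : n ≠ 0) :
    (∫ ω, rSAR e g (X ω, S ω) ∂P = risk P X Y g) ∧
      ∫ ω, empRisk (rSAR e) X S n g ω ∂(Measure.pi fun _ : Fin n => P) =
        risk P X Y g := by
  have hunbiased := hprop.integral_rSAR hX hY hS hYb hSb he hg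
  have hint := hprop.integrable_rSAR hX hY hS hYb hSb he hg
  exact ⟨hunbiased, (integral_empRisk hint hn).trans hunbiased⟩

/-- **Unbiasedness of the SAR risk.** If the propensity satisfies `e(x) > 0`, then for
every classifier `g` the SAR loss is unbiased, `E[r_SAR(g,(X,S))] = P(g(X) ≠ Y)`, and
consequently the empirical SAR risk on an i.i.d. `n`-sample has expectation
`P(g(X) ≠ Y)`. -/
theorem rSAR_unbiased
    (dim : ℕ) (Ω : Type*) [MeasurableSpace Ω] (P : Measure Ω) [IsProbabilityMeasure P]
    (X : Ω → (Fin dim → ℝ)) (Y S : Ω → ℝ) (η e : (Fin dim → ℝ) → ℝ)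
    (g : (Fin dim → ℝ) → ℝ) (n : ℕ)
    (hX : Measurable X) (hY : Measurable Y) (hS : Measurable S)
    (hYb : ∀ᵐ ω ∂P, Y ω = 0 ∨ Y ω = 1) (hSb : ∀ᵐ ω ∂P, S ω = 0 ∨ S ω = 1)
    (hreg : IsRegression P X Y η) (hprop : IsPropensity P X Y S e)
    (he : ∀ x, 0 < e x) (hg : IsClassifier g) (hn : 0 < n) :
    (∫ ω, rSAR e g (X ω, S ω) ∂P = risk P X Y g) ∧
      ∫ ω, empRisk (rSAR e) X S n g ω ∂(Measure.pi fun _ : Fin n => P) =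
        risk P X Y g := by
  have he' : ∀ᵐ ω ∂P, e (X ω) ≠ 0 := .of_forall fun ω => (he (X ω)).ne'
  exact rSAR_unbiased_general hX hY hS hYb hSb hprop he' hg hn.ne'
end
end
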